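/- arXiv:1609.07670 — 4 statements merged into one kernel-verified Lean document; each statement's English description precedes it below -/
import Mathlib

section
/- For every integer k ≥ 3 and all sufficiently large n, r_k(k+1, P_n) < twr_{k−2}(n^{62}): every red/blue coloring of the k-element subsets of {1,...,N} with N ≥ twr_{k−2}(⌈n^{62}⌉) contains a red copy of the complete k-uniform hypergraph on k+1 vertices or a blue ordered copy of the k-uniform tight path on n vertices. -/
/-!
Write `k = m + 2`. Given a colouring without a blue tight path on `n` vertices, label each
`(k - 1)`-set `T` by the length `f T < n` of the longest blue tight path ending in `T`. If `e` is a
`k`-set and `f (e \ {max e}) ≥ f (e \ {min e})`, then `e` is red, since a blue `e` would extend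
a path ending in `e \ {max e}` to a longer one ending in `e \ {min e}`. So it suffices to find, for
every labelling of `(k - 1)`-sets by `n` labels, a set of `k + 1` vertices all of whose `k`-subsets
have this property (`MonoClique`, `Forces`, `Forces.ramsey`).

For `k = 3` (`exists_four`), polynomially many vertices are enough. Averaging over `2n + 3`
consecutive blocks gives `a < d` and a label `t` such that a large set `S` between them satisfies
`f {a, x} = t ≥ f {x, d}` for `x ∈ S`. Colour a pair in `S` according to whether its label is at
least `t` or below `t`. If a monochromatic triangle `x < y < z` has `f {y, z} ≤ f {x, y}`, then
`{x, y, z, d}` or `{a, x, y, z}` is the required quadruple; otherwise labels increase along all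
monochromatic triangles. In that case `exists_rich_edge` gives a pair `u < v` with a constant
proportion of `S` to the left, and a constant proportion of `S` to the right, joined to both `u`
and `v` in the colour of `uv`. Pairs of this colour on the left have labels below `f {u, v}` and
those on the right have labels above it, so on one of the two sides the range of labels of this
colour is halved. As the two ranges can be halved only `O(log n)` times in total, `S` has
polynomial size (`card_lt_of_mono_triangles`).

The rich pair comes from dependent random choice. Some colour has a positive density of
monochromatic cherries `x < u < y`; if there were no rich pair, the common neighbourhood of a
typical pair `x, y` would contain very few pairs of that colour, and inside such a nearly
monochromatic set there is a rich pair of the other colour.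

For larger `k`, an Erdős–Rado argument (`Forces.step`) replaces the vertex bound `M` by
`(2n) ^ (M ^ (k - 2))`. The first step gives `2 ^ (n ^ 61)`, and every later one adds one
exponential and a constant factor at the top of the tower, which `n ^ 62` absorbs.
-/

/-!
Colorings are maps from finite sets of naturals to `Bool`,
with `true` = red and `false` = blue.  All structures live inside
the vertex set `{1, ..., N}`, i.e. `Finset.Icc 1 N`.
-/

/-- A blue ordered copy of the `k`-uniform tight path on `n` vertices inside `{1,...,N}`:
a strictly increasing sequence `x 0 < x 1 < ⋯ < x (n-1)` of elements of `{1,...,N}`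
all of whose consecutive `k`-element windows are blue. -/
def HasBlueTightPath (k n N : ℕ) (χ : Finset ℕ → Bool) : Prop :=
  ∃ x : ℕ → ℕ, StrictMono x ∧ (∀ i < n, x i ∈ Finset.Icc 1 N) ∧
    ∀ j, j + k ≤ n → χ ((Finset.range k).image fun i => x (j + i)) = false

/-- A red copy of the complete `k`-uniform hypergraph on `s` vertices inside `{1,...,N}`:
a set of `s` vertices all of whose `k`-element subsets are red. -/
def HasRedClique (k s N : ℕ) (χ : Finset ℕ → Bool) : Prop :=
  ∃ S : Finset ℕ, S ⊆ Finset.Icc 1 N ∧ S.card = s ∧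
    ∀ e ⊆ S, e.card = k → χ e = true

/-- The Ramsey number `r_k(s, P_n)`. -/
noncomputable def cliquePathRamsey (k s n : ℕ) : ℕ :=
  sInf {N | ∀ χ : Finset ℕ → Bool, HasRedClique k s N χ ∨ HasBlueTightPath k n N χ}

/-- An ordered copy of the path power `P_m^ℓ` in color `c` inside `{1,...,N}`:
a strictly increasing sequence `x 0 < ⋯ < x (m-1)` in `{1,...,N}` with
`χ {x i, x j} = c` whenever `i < j < m` and `j - i ≤ ℓ`. -/
def HasPowPath (ℓ m N : ℕ) (c : Bool) (χ : Finset ℕ → Bool) : Prop :=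
  ∃ x : ℕ → ℕ, StrictMono x ∧ (∀ i < m, x i ∈ Finset.Icc 1 N) ∧
    ∀ i j, i < j → j < m → j - i ≤ ℓ → χ {x i, x j} = c

/-- The ordered Ramsey number `r(P_a^ℓ, P_b^ℓ)`. -/
noncomputable def powPathRamsey (ℓ a b : ℕ) : ℕ :=
  sInf {N | ∀ χ : Finset ℕ → Bool, HasPowPath ℓ a N true χ ∨ HasPowPath ℓ b N false χ}

/-- A set of `s` vertices inside `{1,...,N}` spanning at least `t` red `k`-element subsets. -/
def HasRedSpread (k s t N : ℕ) (χ : Finset ℕ → Bool) : Prop :=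
  ∃ S : Finset ℕ, S ⊆ Finset.Icc 1 N ∧ S.card = s ∧
    t ≤ ((Finset.powersetCard k S).filter fun e => χ e = true).card

/-- The Ramsey number `r_k(s, t; P_n)`. -/
noncomputable def spreadPathRamsey (k s t n : ℕ) : ℕ :=
  sInf {N | ∀ χ : Finset ℕ → Bool, HasRedSpread k s t N χ ∨ HasBlueTightPath k n N χ}

/-- A set `S` of `k+1` vertices inside `{1,...,N}` spanning at least `t` red `k`-element
subsets, one of which consists of the `k` smallest vertices of `S` (i.e. `S` minus its
maximum element `v`). -/
def HasRedInitialSpread (k t N : ℕ) (χ : Finset ℕ → Bool) : Prop :=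
  ∃ S : Finset ℕ, S ⊆ Finset.Icc 1 N ∧ S.card = k + 1 ∧
    (∃ v ∈ S, (∀ u ∈ S, u ≤ v) ∧ χ (S.erase v) = true) ∧
    t ≤ ((Finset.powersetCard k S).filter fun e => χ e = true).card

/-- The Ramsey number `f_k(k+1, t; P_n)`: the minimum `N` such that every coloring of the
`k`-sets of `{1,...,N}` has a blue tight path on `n` vertices or a set of `k+1` vertices
spanning at least `t` red `k`-sets, one of which consists of its `k` smallest vertices. -/
noncomputable def initialSpreadPathRamsey (k t n : ℕ) : ℕ :=
  sInf {N | ∀ χ : Finset ℕ → Bool, HasRedInitialSpread k t N χ ∨ HasBlueTightPath k n N χ}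

/-- A blue ordered copy of the `k`-uniform broom `B_{a,m}` inside `{1,...,N}`:
vertices `v 0 < ⋯ < v (a-1) < w 0 < ⋯ < w (m-1)`, every consecutive `k`-window of the
`v`'s is blue, and (provided `a ≥ k-1`) for each `j` the `k`-set consisting of the last
`k-1` of the `v`'s together with `w j` is blue. -/
def HasBlueBroom (k a m N : ℕ) (χ : Finset ℕ → Bool) : Prop :=
  ∃ v w : ℕ → ℕ, StrictMono v ∧ StrictMono w ∧
    (∀ i < a, v i ∈ Finset.Icc 1 N) ∧ (∀ j < m, w j ∈ Finset.Icc 1 N) ∧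
    (∀ i < a, ∀ j < m, v i < w j) ∧
    (∀ j, j + k ≤ a → χ ((Finset.range k).image fun i => v (j + i)) = false) ∧
    (k - 1 ≤ a → ∀ j < m,
      χ (insert (w j) ((Finset.range (k - 1)).image fun i => v (a - (k - 1) + i))) = false)

/-- The Ramsey number `r_3(4, 3; B_{a,m})` for the `3`-uniform broom. -/
noncomputable def spreadBroomRamsey3 (a m : ℕ) : ℕ :=
  sInf {N | ∀ χ : Finset ℕ → Bool, HasRedSpread 3 4 3 N χ ∨ HasBlueBroom 3 a m N χ}

/-- The tower function: `twr 1 x = x` and `twr (i+1) x = 2 ^ twr i x`. -/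
def twr (i x : ℕ) : ℕ := (fun y => 2 ^ y)^[i - 1] x

/-- The real tower function: `rtwr 1 x = x` and `rtwr (i+1) x = 2 ^ rtwr i x`. -/
noncomputable def rtwr (i : ℕ) (x : ℝ) : ℝ := (fun y => (2 : ℝ) ^ y)^[i - 1] x

/-! ### Rich pairs in two-coloured ordered complete graphs -/

lemma exists_split (S : Finset ℕ) (M R : ℕ) (h : M + R ≤ S.card) :
    ∃ A B : Finset ℕ, A ⊆ S ∧ B ⊆ S ∧ A.card = M ∧ R ≤ B.card ∧ ∀ a ∈ A, ∀ b ∈ B, a < b := by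
  induction M generalizing R with
  | zero => exact ⟨∅, S, by simp, subset_rfl, by simp, by omega, by simp⟩
  | succ M ih =>
    obtain ⟨A, B, hA, hB, hAc, hBc, hlt⟩ := ih (R + 1) (by omega)
    have hne : B.Nonempty := Finset.card_pos.mp (by omega)
    have hb := B.min'_mem hne
    refine ⟨insert (B.min' hne) A, B.erase (B.min' hne), ?_, ?_, ?_, ?_, ?_⟩
    · exact Finset.insert_subset (hB hb) hA
    · exact (Finset.erase_subset _ _).trans hB
    · rw [Finset.card_insert_of_notMem, hAc]
      intro hmem
      exact lt_irrefl _ (hlt _ hmem _ hb)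
    · rw [Finset.card_erase_of_mem hb]; omega
    · intro a ha b hb'
      have hbB := Finset.mem_of_mem_erase hb'
      rcases Finset.mem_insert.mp ha with rfl | ha
      · exact lt_of_le_of_ne (B.min'_le b hbB) (Finset.ne_of_mem_erase hb').symm
      · exact hlt a ha b hbB

lemma exists_split4 (S : Finset ℕ) (q : ℕ) (h : 4 * q ≤ S.card) :
    ∃ A B C D : Finset ℕ, (A ⊆ S ∧ B ⊆ S ∧ C ⊆ S ∧ D ⊆ S) ∧
      (A.card = q ∧ B.card = q ∧ C.card = q ∧ D.card = q) ∧
      (∀ a ∈ A, ∀ b ∈ B, a < b) ∧ (∀ a ∈ A, ∀ b ∈ C, a < b) ∧ (∀ a ∈ A, ∀ b ∈ D, a < b) ∧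
      (∀ a ∈ B, ∀ b ∈ C, a < b) ∧ (∀ a ∈ B, ∀ b ∈ D, a < b) ∧ (∀ a ∈ C, ∀ b ∈ D, a < b) := by
  obtain ⟨A, S1, hA, hS1, hAc, h1, hlt1⟩ := exists_split S q (3 * q) (by omega)
  obtain ⟨B, S2, hB, hS2, hBc, h2, hlt2⟩ := exists_split S1 q (2 * q) (by omega)
  obtain ⟨C, S3, hC, hS3, hCc, h3, hlt3⟩ := exists_split S2 q q (by omega)
  obtain ⟨D, hD, hDc⟩ := Finset.exists_subset_card_eq h3
  refine ⟨A, B, C, D, ⟨hA, hB.trans hS1, (hC.trans hS2).trans hS1,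
    ((hD.trans hS3).trans hS2).trans hS1⟩, ⟨hAc, hBc, hCc, hDc⟩, ?_, ?_, ?_, ?_, ?_, ?_⟩
  · exact fun a ha b hb => hlt1 a ha b (hB hb)
  · exact fun a ha b hb => hlt1 a ha b (hS2 (hC hb))
  · exact fun a ha b hb => hlt1 a ha b (hS2 (hS3 (hD hb)))
  · exact fun a ha b hb => hlt2 a ha b (hC hb)
  · exact fun a ha b hb => hlt2 a ha b (hS3 (hD hb))
  · exact fun a ha b hb => hlt3 a ha b (hD hb)

/-- The indicator that the pair `(x, y)` has colour `c`. All colourings `col` of pairs are evaluated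
only at `x < y`. -/
noncomputable def ind (col : ℕ → ℕ → Bool) (c : Bool) (x y : ℕ) : ℝ :=
  if col x y = c then 1 else 0

lemma ind_nonneg (col : ℕ → ℕ → Bool) (c : Bool) (x y : ℕ) : 0 ≤ ind col c x y := by
  unfold ind; split_ifs <;> norm_num

lemma ind_le_one (col : ℕ → ℕ → Bool) (c : Bool) (x y : ℕ) : ind col c x y ≤ 1 := by
  unfold ind; split_ifs <;> norm_num

/-- The vertices of `S` to the left of `u` that are joined to both `u` and `v` in colour `c`; used
for `u < v`. -/
def leftNbrs (col : ℕ → ℕ → Bool) (S : Finset ℕ) (c : Bool) (u v : ℕ) : Finset ℕ :=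
  S.filter fun x => x < u ∧ col x u = c ∧ col x v = c

/-- The vertices of `S` to the right of `v` that are joined to both `u` and `v` in colour `c`; used
for `u < v`. -/
def rightNbrs (col : ℕ → ℕ → Bool) (S : Finset ℕ) (c : Bool) (u v : ℕ) : Finset ℕ :=
  S.filter fun y => v < y ∧ col u y = c ∧ col v y = c

/-- In some colour and for some three consecutive blocks of size `M`, at least a tenth of the
triples `x < u < y` are monochromatic cherries centred at `u`. The reason is that among five
vertices `x₁ < ⋯ < x₅` one of the five paths `123`, `124`, `234`, `245`, `345` is monochromatic. -/
lemma exists_mono_cherry (col : ℕ → ℕ → Bool) (S : Finset ℕ) (M : ℕ) (hM : 5 * M ≤ S.card) :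
    ∃ (c : Bool) (L C R : Finset ℕ), L ⊆ S ∧ C ⊆ S ∧ R ⊆ S ∧
      L.card = M ∧ C.card = M ∧ R.card = M ∧
      (∀ x ∈ L, ∀ u ∈ C, x < u) ∧ (∀ u ∈ C, ∀ y ∈ R, u < y) ∧
      (M : ℝ) ^ 3 ≤ 10 * ∑ x ∈ L, ∑ u ∈ C, ∑ y ∈ R, ind col c x u * ind col c u y := by
  obtain ⟨I1, S', h1, hS', c1, hS'c, hlt⟩ := exists_split S M (4 * M) (by omega)
  obtain ⟨I2, I3, I4, I5, ⟨h2, h3, h4, h5⟩, ⟨c2, c3, c4, c5⟩, l23, l24, l25, l34, l35, l45⟩ :=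
    exists_split4 S' M hS'c
  by_contra hcon
  push Not at hcon
  set T : Bool → Finset ℕ → Finset ℕ → Finset ℕ → ℝ := fun c L C R =>
    ∑ x ∈ L, ∑ u ∈ C, ∑ y ∈ R, ind col c x u * ind col c u y with hT
  have hlt' : ∀ J ⊆ S', ∀ a ∈ I1, ∀ b ∈ J, a < b := fun J hJ a ha b hb => hlt a ha b (hJ hb)
  have e1 : ∀ c, 10 * T c I1 I2 I3 < (M : ℝ) ^ 3 := fun c =>
    hcon c I1 I2 I3 h1 (h2.trans hS') (h3.trans hS') c1 c2 c3 (hlt' _ h2) l23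
  have e2 : ∀ c, 10 * T c I1 I2 I4 < (M : ℝ) ^ 3 := fun c =>
    hcon c I1 I2 I4 h1 (h2.trans hS') (h4.trans hS') c1 c2 c4 (hlt' _ h2) l24
  have e3 : ∀ c, 10 * T c I2 I3 I4 < (M : ℝ) ^ 3 := fun c =>
    hcon c I2 I3 I4 (h2.trans hS') (h3.trans hS') (h4.trans hS') c2 c3 c4 l23 l34
  have e4 : ∀ c, 10 * T c I2 I4 I5 < (M : ℝ) ^ 3 := fun c =>
    hcon c I2 I4 I5 (h2.trans hS') (h4.trans hS') (h5.trans hS') c2 c4 c5 l24 l45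
  have e5 : ∀ c, 10 * T c I3 I4 I5 < (M : ℝ) ^ 3 := fun c =>
    hcon c I3 I4 I5 (h3.trans hS') (h4.trans hS') (h5.trans hS') c3 c4 c5 l34 l45
  have key : ∑ x1 ∈ I1, ∑ x2 ∈ I2, ∑ x3 ∈ I3, ∑ x4 ∈ I4, ∑ x5 ∈ I5, (1 : ℝ) ≤
      ∑ x1 ∈ I1, ∑ x2 ∈ I2, ∑ x3 ∈ I3, ∑ x4 ∈ I4, ∑ x5 ∈ I5, ∑ c : Bool,
        (ind col c x1 x2 * ind col c x2 x3 + ind col c x1 x2 * ind col c x2 x4 +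
         ind col c x2 x3 * ind col c x3 x4 + ind col c x2 x4 * ind col c x4 x5 +
         ind col c x3 x4 * ind col c x4 x5) := by
    gcongr with x1 _ x2 _ x3 _ x4 _ x5 _
    rw [Fintype.sum_bool]
    unfold ind
    cases col x1 x2 <;> cases col x2 x3 <;> cases col x2 x4 <;> cases col x3 x4 <;>
      cases col x4 x5 <;> norm_num
  have rhs : ∑ x1 ∈ I1, ∑ x2 ∈ I2, ∑ x3 ∈ I3, ∑ x4 ∈ I4, ∑ x5 ∈ I5, ∑ c : Bool,
        (ind col c x1 x2 * ind col c x2 x3 + ind col c x1 x2 * ind col c x2 x4 +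
         ind col c x2 x3 * ind col c x3 x4 + ind col c x2 x4 * ind col c x4 x5 +
         ind col c x3 x4 * ind col c x4 x5) =
      (M : ℝ) ^ 2 * ∑ c : Bool, (T c I1 I2 I3 + T c I1 I2 I4 + T c I2 I3 I4 + T c I2 I4 I5
        + T c I3 I4 I5) := by
    simp only [Fintype.sum_bool, hT, Finset.sum_add_distrib, Finset.sum_const, c1, c2, c3, c4, c5,
      nsmul_eq_mul, ← Finset.mul_sum]
    ring
  rw [rhs] at key
  simp only [Finset.sum_const, c1, c2, c3, c4, c5, nsmul_eq_mul, Fintype.sum_bool] at key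
  have hM0 : (0 : ℝ) ≤ (M : ℝ) := by positivity
  rcases Nat.eq_zero_or_pos M with h0 | hpos
  · have := e1 true
    subst h0
    have hI : I1 = ∅ := Finset.card_eq_zero.mp c1
    simp [hT, hI] at this
  · have hp : (0 : ℝ) < (M : ℝ) ^ 2 := by positivity
    have := e1 true; have := e1 false; have := e2 true; have := e2 false
    have := e3 true; have := e3 false; have := e4 true; have := e4 false
    have := e5 true; have := e5 false
    have : (M : ℝ) ^ 2 * (M : ℝ) ^ 3 ≤ (M : ℝ) ^ 2 *
      ((T true I1 I2 I3 + T true I1 I2 I4 + T true I2 I3 I4 + T true I2 I4 I5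
        + T true I3 I4 I5) + (T false I1 I2 I3 + T false I1 I2 I4 + T false I2 I3 I4
        + T false I2 I4 I5 + T false I3 I4 I5)) := by
      refine le_trans (le_of_eq ?_) key
      ring
    have := le_of_mul_le_mul_left this hp
    linarith

lemma common_left_le (col : ℕ → ℕ → Bool) (S L : Finset ℕ) (c : Bool) (u v : ℕ) (hL : L ⊆ S)
    (hlt : ∀ x ∈ L, x < u) :
    ∑ x ∈ L, ind col c x u * ind col c x v ≤ ((leftNbrs col S c u v).card : ℝ) := by
  have : ∑ x ∈ L, ind col c x u * ind col c x v
      = ((L.filter fun x => col x u = c ∧ col x v = c).card : ℝ) := by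
    rw [Finset.card_filter]; push_cast
    refine Finset.sum_congr rfl fun x _ => ?_
    unfold ind; split_ifs <;> simp_all
  rw [this]
  exact_mod_cast Finset.card_le_card fun x hx => by
    rw [Finset.mem_filter] at hx
    exact Finset.mem_filter.mpr ⟨hL hx.1, hlt x hx.1, hx.2⟩

lemma common_right_le (col : ℕ → ℕ → Bool) (S R : Finset ℕ) (c : Bool) (u v : ℕ) (hR : R ⊆ S)
    (hlt : ∀ y ∈ R, v < y) :
    ∑ y ∈ R, ind col c u y * ind col c v y ≤ ((rightNbrs col S c u v).card : ℝ) := by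
  have : ∑ y ∈ R, ind col c u y * ind col c v y
      = ((R.filter fun y => col u y = c ∧ col v y = c).card : ℝ) := by
    rw [Finset.card_filter]; push_cast
    refine Finset.sum_congr rfl fun x _ => ?_
    unfold ind; split_ifs <;> simp_all
  rw [this]
  exact_mod_cast Finset.card_le_card fun x hx => by
    rw [Finset.mem_filter] at hx
    exact Finset.mem_filter.mpr ⟨hR hx.1, hlt x hx.1, hx.2⟩

lemma sum_ind_mul_le_card (L : Finset ℕ) (f g : ℕ → ℝ) (hf : ∀ x, 0 ≤ f x ∧ f x ≤ 1)
    (hg : ∀ x, 0 ≤ g x ∧ g x ≤ 1) : ∑ x ∈ L, f x * g x ≤ (L.card : ℝ) := by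
  calc ∑ x ∈ L, f x * g x ≤ ∑ x ∈ L, (1 : ℝ) :=
        Finset.sum_le_sum fun x _ => mul_le_one₀ (hf x).2 (hg x).1 (hg x).2
    _ = L.card := by simp

/-- No edge `uv` has at least `D` common neighbours of its own colour on both sides. -/
def NoRichEdge (col : ℕ → ℕ → Bool) (S : Finset ℕ) (D : ℝ) : Prop :=
  ∀ u ∈ S, ∀ v ∈ S, u < v →
    ((leftNbrs col S (col u v) u v).card : ℝ) < D ∨ ((rightNbrs col S (col u v) u v).card : ℝ) < D

/-- If no pair is rich, then a pair of colour `c` has few common neighbours of colour `c` in `L` or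
few in `R`, so the product of the two numbers is at most `D * M`. -/
lemma pair_bound {col : ℕ → ℕ → Bool} {S : Finset ℕ} {D : ℝ} (h : NoRichEdge col S D)
    (c : Bool) (L R : Finset ℕ) (M : ℕ) (hL : L ⊆ S) (hR : R ⊆ S) (hLc : L.card = M)
    (hRc : R.card = M) (u v : ℕ) (hu : u ∈ S) (hv : v ∈ S) (huv : u < v)
    (hLu : ∀ x ∈ L, x < u) (hvR : ∀ y ∈ R, v < y) :
    ind col c u v * ((∑ x ∈ L, ind col c x u * ind col c x v) *
      (∑ y ∈ R, ind col c u y * ind col c v y)) ≤ ind col c u v * (D * M) := by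
  by_cases hc : col u v = c
  · refine mul_le_mul_of_nonneg_left ?_ (ind_nonneg _ _ _ _)
    have hl := common_left_le col S L c u v hL hLu
    have hr := common_right_le col S R c u v hR hvR
    have hl' : ∑ x ∈ L, ind col c x u * ind col c x v ≤ (M : ℝ) := by
      rw [← hLc]
      exact sum_ind_mul_le_card L (fun x => ind col c x u) (fun x => ind col c x v)
        (fun x => ⟨ind_nonneg _ _ _ _, ind_le_one _ _ _ _⟩)
        (fun x => ⟨ind_nonneg _ _ _ _, ind_le_one _ _ _ _⟩)
    have hr' : ∑ y ∈ R, ind col c u y * ind col c v y ≤ (M : ℝ) := by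
      rw [← hRc]
      exact sum_ind_mul_le_card R (fun x => ind col c u x) (fun x => ind col c v x)
        (fun x => ⟨ind_nonneg _ _ _ _, ind_le_one _ _ _ _⟩)
        (fun x => ⟨ind_nonneg _ _ _ _, ind_le_one _ _ _ _⟩)
    have hl0 : 0 ≤ ∑ x ∈ L, ind col c x u * ind col c x v :=
      Finset.sum_nonneg fun x _ => mul_nonneg (ind_nonneg _ _ _ _) (ind_nonneg _ _ _ _)
    have hr0 : 0 ≤ ∑ y ∈ R, ind col c u y * ind col c v y :=
      Finset.sum_nonneg fun x _ => mul_nonneg (ind_nonneg _ _ _ _) (ind_nonneg _ _ _ _)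
    have hb := h u hu v hv huv
    rw [hc] at hb
    rcases hb with hb | hb
    · exact mul_le_mul (by linarith) hr' hr0 (by linarith)
    · rw [mul_comm]
      exact mul_le_mul (by linarith) hl' hl0 (by linarith)
  · simp [ind, hc]

/-- The number of pairs of colour `c` inside `D`. -/
noncomputable def edgeCount (col : ℕ → ℕ → Bool) (c : Bool) (D : Finset ℕ) : ℝ :=
  ∑ u ∈ D, ∑ v ∈ D, if u < v then ind col c u v else 0

lemma sum_four_le (D A B C E : Finset ℕ) (g : ℕ → ℝ) (hg : ∀ x, 0 ≤ g x)
    (hA : A ⊆ D) (hB : B ⊆ D) (hC : C ⊆ D) (hE : E ⊆ D)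
    (hAB : ∀ a ∈ A, ∀ b ∈ B, a < b) (hAC : ∀ a ∈ A, ∀ b ∈ C, a < b)
    (hAE : ∀ a ∈ A, ∀ b ∈ E, a < b) (hBC : ∀ a ∈ B, ∀ b ∈ C, a < b)
    (hBE : ∀ a ∈ B, ∀ b ∈ E, a < b) (hCE : ∀ a ∈ C, ∀ b ∈ E, a < b) :
    ∑ x ∈ A, g x + ∑ x ∈ B, g x + ∑ x ∈ C, g x + ∑ x ∈ E, g x ≤ ∑ x ∈ D, g x := by
  have hd : ∀ X Y : Finset ℕ, (∀ a ∈ X, ∀ b ∈ Y, a < b) → Disjoint X Y := fun X Y h =>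
    Finset.disjoint_left.mpr fun a ha hb => lt_irrefl _ (h a ha a hb)
  have d1 : Disjoint (A ∪ B) C := Finset.disjoint_union_left.mpr ⟨hd _ _ hAC, hd _ _ hBC⟩
  have d2 : Disjoint (A ∪ B ∪ C) E := Finset.disjoint_union_left.mpr
    ⟨Finset.disjoint_union_left.mpr ⟨hd _ _ hAE, hd _ _ hBE⟩, hd _ _ hCE⟩
  rw [← Finset.sum_union (hd _ _ hAB), ← Finset.sum_union d1, ← Finset.sum_union d2]
  exact Finset.sum_le_sum_of_subset_of_nonneg
    (Finset.union_subset (Finset.union_subset (Finset.union_subset hA hB) hC) hE)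
    fun x _ _ => hg x

/-- A set `D` with few pairs of colour `c` forces a rich pair of the other colour: cut `D` into
blocks `A < B < C < E`; most quadruples from these blocks span no pair of colour `c` among the
five pairs `AB`, `AC`, `BC`, `BE`, `CE`, and each of them counts a common left and a common right
neighbour of its middle pair. -/
lemma sparse_contra {col : ℕ → ℕ → Bool} {S : Finset ℕ} {δ : ℝ} (h : NoRichEdge col S δ)
    (c : Bool) (D : Finset ℕ) (hD : D ⊆ S) (q : ℕ) (hq : 0 < q) (hDq : 4 * q ≤ D.card)
    (he : edgeCount col c D ≤ 0.85 * (q : ℝ) ^ 2) (hδ : δ < 0.15 * q) : False := by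
  obtain ⟨A, B, C, E, ⟨hA, hB, hC, hE⟩, ⟨cA, cB, cC, cE⟩, lAB, lAC, lAE, lBC, lBE, lCE⟩ :=
    exists_split4 D q hDq
  set w : ℕ → ℕ → ℝ := fun u v => if u < v then ind col c u v else 0 with hw
  have hw0 : ∀ u v, 0 ≤ w u v := fun u v => by
    simp only [hw]; split_ifs
    · exact ind_nonneg _ _ _ _
    · exact le_rfl
  set e : Finset ℕ → Finset ℕ → ℝ := fun X Y => ∑ x ∈ X, ∑ y ∈ Y, ind col c x y with he'
  have hew : ∀ X Y : Finset ℕ, (∀ a ∈ X, ∀ b ∈ Y, a < b) →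
      ∑ x ∈ X, ∑ y ∈ Y, w x y = e X Y := fun X Y hXY =>
    Finset.sum_congr rfl fun x hx => Finset.sum_congr rfl fun y hy => by
      simp [hw, hXY x hx y hy]
  have hsum : e A B + e A C + e B C + e B E + e C E ≤ 0.85 * (q : ℝ) ^ 2 := by
    refine le_trans ?_ he
    have hin : ∀ u, ∑ v ∈ A, w u v + ∑ v ∈ B, w u v + ∑ v ∈ C, w u v + ∑ v ∈ E, w u v
        ≤ ∑ v ∈ D, w u v := fun u =>
      sum_four_le D A B C E (w u) (hw0 u) hA hB hC hE lAB lAC lAE lBC lBE lCE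
    have hout := sum_four_le D A B C E (fun u => ∑ v ∈ D, w u v)
      (fun u => Finset.sum_nonneg fun v _ => hw0 u v) hA hB hC hE lAB lAC lAE lBC lBE lCE
    have hn : ∀ X : Finset ℕ, ∀ u, 0 ≤ ∑ v ∈ X, w u v := fun X u =>
      Finset.sum_nonneg fun v _ => hw0 u v
    have a1 : e A B + e A C ≤ ∑ u ∈ A, ∑ v ∈ D, w u v := by
      rw [← hew A B lAB, ← hew A C lAC, ← Finset.sum_add_distrib]
      exact Finset.sum_le_sum fun u _ => by linarith [hin u, hn A u, hn E u]
    have a2 : e B C + e B E ≤ ∑ u ∈ B, ∑ v ∈ D, w u v := by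
      rw [← hew B C lBC, ← hew B E lBE, ← Finset.sum_add_distrib]
      exact Finset.sum_le_sum fun u _ => by linarith [hin u, hn A u, hn B u]
    have a3 : e C E ≤ ∑ u ∈ C, ∑ v ∈ D, w u v := by
      rw [← hew C E lCE]
      exact Finset.sum_le_sum fun u _ => by linarith [hin u, hn A u, hn B u, hn C u]
    have a4 : 0 ≤ ∑ u ∈ E, ∑ v ∈ D, w u v := Finset.sum_nonneg fun u _ => hn D u
    have : edgeCount col c D = ∑ u ∈ D, ∑ v ∈ D, w u v := rfl
    linarith
  have key : ∑ u ∈ B, ∑ v ∈ C, ∑ x ∈ A, ∑ y ∈ E, (1 : ℝ) ≤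
      ∑ u ∈ B, ∑ v ∈ C, ∑ x ∈ A, ∑ y ∈ E,
        (ind col c x u + ind col c x v + ind col c u v + ind col c u y + ind col c v y +
          ind col (!c) u v * ((ind col (!c) x u * ind col (!c) x v) *
            (ind col (!c) u y * ind col (!c) v y))) := by
    gcongr with u _ v _ x _ y _
    unfold ind
    cases c <;> cases col x u <;> cases col x v <;> cases col u v <;> cases col u y <;>
      cases col v y <;> norm_num
  have hgood : ∑ u ∈ B, ∑ v ∈ C, ∑ x ∈ A, ∑ y ∈ E,
      ind col (!c) u v * ((ind col (!c) x u * ind col (!c) x v) *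
            (ind col (!c) u y * ind col (!c) v y)) ≤ (q : ℝ) ^ 2 * (δ * q) := by
    have hδ0 : ∀ u ∈ B, ∀ v ∈ C, 0 ≤ δ * q := fun u hu v hv => by
      have := h u (hD (hB hu)) v (hD (hC hv)) (lBC u hu v hv)
      have : 0 ≤ δ := by
        rcases this with h | h <;> exact le_trans (Nat.cast_nonneg _) h.le
      positivity
    calc _ = ∑ u ∈ B, ∑ v ∈ C, ind col (!c) u v *
            ((∑ x ∈ A, ind col (!c) x u * ind col (!c) x v) *
            (∑ y ∈ E, ind col (!c) u y * ind col (!c) v y)) := by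
          refine Finset.sum_congr rfl fun u _ => Finset.sum_congr rfl fun v _ => ?_
          rw [Finset.sum_mul_sum, Finset.mul_sum]
          exact Finset.sum_congr rfl fun x _ => by rw [Finset.mul_sum]
      _ ≤ ∑ u ∈ B, ∑ v ∈ C, δ * q := by
          refine Finset.sum_le_sum fun u hu => Finset.sum_le_sum fun v hv => ?_
          refine (pair_bound h (!c) A E q (hA.trans hD) (hE.trans hD) cA cE u v (hD (hB hu))
            (hD (hC hv)) (lBC u hu v hv) (fun x hx => lAB x hx u hu)
            (fun y hy => lCE v hv y hy)).trans ?_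
          exact mul_le_of_le_one_left (hδ0 u hu v hv) (ind_le_one _ _ _ _)
      _ = (q : ℝ) ^ 2 * (δ * q) := by
          simp only [Finset.sum_const, cB, cC, nsmul_eq_mul]; ring
  have hswap1 : ∑ u ∈ B, ∑ x ∈ A, ind col c x u = e A B := Finset.sum_comm
  have hswap2 : ∑ v ∈ C, ∑ x ∈ A, ind col c x v = e A C := Finset.sum_comm
  have hred : ∑ u ∈ B, ∑ v ∈ C, ∑ x ∈ A, ∑ y ∈ E,
        (ind col c x u + ind col c x v + ind col c u v + ind col c u y + ind col c v y) =
      (q : ℝ) ^ 2 * (e A B + e A C + e B C + e B E + e C E) := by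
    rw [← hswap1, ← hswap2]
    simp only [he', Finset.sum_add_distrib, Finset.sum_const, cA, cB, cC, cE,
      nsmul_eq_mul, ← Finset.mul_sum]
    ring
  have hsplit : ∑ u ∈ B, ∑ v ∈ C, ∑ x ∈ A, ∑ y ∈ E,
        (ind col c x u + ind col c x v + ind col c u v + ind col c u y + ind col c v y +
          ind col (!c) u v * ((ind col (!c) x u * ind col (!c) x v) *
            (ind col (!c) u y * ind col (!c) v y))) =
      ∑ u ∈ B, ∑ v ∈ C, ∑ x ∈ A, ∑ y ∈ E,
        (ind col c x u + ind col c x v + ind col c u v + ind col c u y + ind col c v y) +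
      ∑ u ∈ B, ∑ v ∈ C, ∑ x ∈ A, ∑ y ∈ E,
          ind col (!c) u v * ((ind col (!c) x u * ind col (!c) x v) *
            (ind col (!c) u y * ind col (!c) v y)) := by
    simp only [← Finset.sum_add_distrib]
  rw [hsplit, hred] at key
  simp only [Finset.sum_const, cA, cB, cC, cE, nsmul_eq_mul, mul_one] at key
  have hq' : (0 : ℝ) < q := by exact_mod_cast hq
  have hq2 : (0 : ℝ) < (q : ℝ) ^ 2 := by positivity
  have k2 : (q : ℝ) ^ 2 * (q : ℝ) ^ 2 ≤ (q : ℝ) ^ 2 * (0.85 * (q : ℝ) ^ 2 + δ * q) := by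
    have := mul_le_mul_of_nonneg_left hsum hq2.le
    linarith [key, hgood, this, show (q : ℝ) * (q * (q * q)) = (q : ℝ) ^ 2 * (q : ℝ) ^ 2 by ring]
  have k3 := le_of_mul_le_mul_left k2 hq2
  nlinarith [mul_lt_mul_of_pos_right hδ hq']

/-- Dependent random choice: if no pair is rich, then the common neighbourhood in colour `c` of a
suitable pair `x < y` is large but contains few pairs of colour `c`. -/
lemma exists_sparse {col : ℕ → ℕ → Bool} {S : Finset ℕ} {δ : ℝ} (h : NoRichEdge col S δ)
    (M : ℕ) (hM0 : 0 < M) (hM : 5 * M ≤ S.card) (hδ0 : 0 ≤ δ) (hδ : δ ≤ M / 1600) :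
    ∃ (c : Bool) (D : Finset ℕ), D ⊆ S ∧ (M : ℝ) / 17 ≤ D.card ∧
      edgeCount col c D ≤ (D.card : ℝ) ^ 2 / 20 := by
  obtain ⟨c, L, C, R, hL, hC, hR, cL, cC, cR, lLC, lCR, hT⟩ := exists_mono_cherry col S M hM
  set Dd : ℕ → ℕ → Finset ℕ := fun x y => C.filter fun u => col x u = c ∧ col u y = c with hDd
  set a : ℕ → ℕ → ℕ → ℝ := fun x y u => ind col c x u * ind col c u y with ha
  have hind : ∀ x y (g : ℕ → ℝ), ∑ u ∈ Dd x y, g u = ∑ u ∈ C, a x y u * g u := by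
    intro x y g
    rw [hDd, Finset.sum_filter]
    refine Finset.sum_congr rfl fun u _ => ?_
    simp only [ha, ind]; split_ifs <;> simp_all
  have hcard : ∀ x y, ((Dd x y).card : ℝ) = ∑ u ∈ C, a x y u := fun x y => by
    have := hind x y (fun _ => 1)
    simpa using this
  set w : ℕ → ℕ → ℝ := fun u v => if u < v then ind col c u v else 0 with hw
  have hw0 : ∀ u v, 0 ≤ w u v := fun u v => by
    simp only [hw]; split_ifs
    · exact ind_nonneg _ _ _ _
    · exact le_rfl
  have hedge : ∀ x y, edgeCount col c (Dd x y)
      = ∑ u ∈ C, ∑ v ∈ C, w u v * (a x y u * a x y v) := by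
    intro x y
    have : edgeCount col c (Dd x y) = ∑ u ∈ Dd x y, ∑ v ∈ Dd x y, w u v := rfl
    rw [this, hind x y]
    refine Finset.sum_congr rfl fun u _ => ?_
    rw [hind x y, Finset.mul_sum]
    exact Finset.sum_congr rfl fun v _ => by ring
  have hMr : (0 : ℝ) < M := by exact_mod_cast hM0
  -- A pair `u < v` of colour `c` lies in `Dd x y` for at most `δ * M` pairs `(x, y)`.
  have hE : ∑ x ∈ L, ∑ y ∈ R, edgeCount col c (Dd x y) ≤ (M : ℝ) ^ 2 / 2 * (δ * M) := by
    have hWhalf : ∑ u ∈ C, ∑ v ∈ C, w u v ≤ (M : ℝ) ^ 2 / 2 := by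
      have hcomm : ∑ u ∈ C, ∑ v ∈ C, w u v = ∑ u ∈ C, ∑ v ∈ C, w v u := Finset.sum_comm
      have : ∑ u ∈ C, ∑ v ∈ C, (w u v + w v u) ≤ ∑ u ∈ C, ∑ v ∈ C, (1 : ℝ) := by
        gcongr with u _ v _
        simp only [hw]
        have h1 := ind_le_one col c u v
        have h2 := ind_le_one col c v u
        split_ifs <;> first | omega | linarith
      simp only [Finset.sum_add_distrib, Finset.sum_const, cC, nsmul_eq_mul, mul_one] at this
      nlinarith
    have hre : ∑ x ∈ L, ∑ y ∈ R, edgeCount col c (Dd x y) = ∑ u ∈ C, ∑ v ∈ C, w u v *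
        ((∑ x ∈ L, ind col c x u * ind col c x v) *
          (∑ y ∈ R, ind col c u y * ind col c v y)) := by
      simp only [hedge]
      have s1 : ∀ x ∈ L, ∑ y ∈ R, ∑ u ∈ C, ∑ v ∈ C, w u v * (a x y u * a x y v)
          = ∑ u ∈ C, ∑ v ∈ C, ∑ y ∈ R, w u v * (a x y u * a x y v) := fun x _ => by
        rw [Finset.sum_comm]
        exact Finset.sum_congr rfl fun u _ => Finset.sum_comm
      rw [Finset.sum_congr rfl s1, Finset.sum_comm]
      refine Finset.sum_congr rfl fun u _ => ?_
      rw [Finset.sum_comm]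
      refine Finset.sum_congr rfl fun v _ => ?_
      rw [Finset.sum_mul_sum, Finset.mul_sum]
      refine Finset.sum_congr rfl fun x _ => ?_
      rw [Finset.mul_sum]
      exact Finset.sum_congr rfl fun y _ => by simp only [ha]; ring
    rw [hre]
    calc _ ≤ ∑ u ∈ C, ∑ v ∈ C, w u v * (δ * M) := by
          refine Finset.sum_le_sum fun u hu => Finset.sum_le_sum fun v hv => ?_
          by_cases huv : u < v
          · simp only [hw, huv, if_true]
            exact pair_bound h c L R M hL hR cL cR u v (hC hu) (hC hv) huv
              (fun x hx => lLC x hx u hu) (fun y hy => lCR v hv y hy)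
          · simp [hw, huv]
      _ = (∑ u ∈ C, ∑ v ∈ C, w u v) * (δ * M) := by
          simp only [Finset.sum_mul]
      _ ≤ _ := mul_le_mul_of_nonneg_right hWhalf (by positivity)
  -- The cherry count is the total size of the sets `Dd x y`; Cauchy–Schwarz bounds their squares.
  have hsize : (M : ℝ) ^ 3 ≤ 10 * ∑ p ∈ L ×ˢ R, ((Dd p.1 p.2).card : ℝ) := by
    refine hT.trans (le_of_eq ?_)
    rw [Finset.sum_product]
    congr 1
    refine Finset.sum_congr rfl fun x _ => ?_
    rw [Finset.sum_comm]
    exact Finset.sum_congr rfl fun y _ => (hcard x y).symm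
  have hcs := sq_sum_le_card_mul_sum_sq (s := L ×ˢ R) (f := fun p => ((Dd p.1 p.2).card : ℝ))
  rw [Finset.card_product, cL, cR] at hcs
  push_cast at hcs
  have hsq : (M : ℝ) ^ 4 / 100 ≤ ∑ p ∈ L ×ˢ R, ((Dd p.1 p.2).card : ℝ) ^ 2 := by
    set X := ∑ p ∈ L ×ˢ R, ((Dd p.1 p.2).card : ℝ)
    have hX : (M : ℝ) ^ 3 / 10 ≤ X := by linarith
    have : ((M : ℝ) ^ 3 / 10) ^ 2 ≤ X ^ 2 := pow_le_pow_left₀ (by positivity) hX 2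
    have h2 : (M : ℝ) ^ 2 * ((M : ℝ) ^ 4 / 100) ≤ (M : ℝ) ^ 2 *
        ∑ p ∈ L ×ˢ R, ((Dd p.1 p.2).card : ℝ) ^ 2 := by
      have e1 : (M : ℝ) ^ 2 * ((M : ℝ) ^ 4 / 100) = ((M : ℝ) ^ 3 / 10) ^ 2 := by ring
      have e2 : (M : ℝ) ^ 2 = (M : ℝ) * M := by ring
      rw [e1, e2]; linarith
    exact le_of_mul_le_mul_left h2 (by positivity)
  have hE' : ∑ p ∈ L ×ˢ R, edgeCount col c (Dd p.1 p.2) ≤ (M : ℝ) ^ 4 / 3200 := by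
    rw [Finset.sum_product]
    refine hE.trans ?_
    have : δ * M ≤ M / 1600 * M := mul_le_mul_of_nonneg_right hδ hMr.le
    calc (M : ℝ) ^ 2 / 2 * (δ * M) ≤ (M : ℝ) ^ 2 / 2 * (M / 1600 * M) :=
          mul_le_mul_of_nonneg_left this (by positivity)
      _ = _ := by ring
  have hex : ∃ p ∈ L ×ˢ R, (M : ℝ) ^ 2 * (3 / 800) ≤
      ((Dd p.1 p.2).card : ℝ) ^ 2 - 20 * edgeCount col c (Dd p.1 p.2) := by
    have hne : (L ×ˢ R).Nonempty := by
      rw [← Finset.card_pos, Finset.card_product, cL, cR]; positivity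
    refine Finset.exists_le_of_sum_le hne ?_
    have hmul : ∑ p ∈ L ×ˢ R, 20 * edgeCount col c (Dd p.1 p.2)
        = 20 * ∑ p ∈ L ×ˢ R, edgeCount col c (Dd p.1 p.2) := (Finset.mul_sum _ _ _).symm
    rw [Finset.sum_sub_distrib, hmul, Finset.sum_const, Finset.card_product, cL, cR,
      nsmul_eq_mul]
    push_cast
    nlinarith [hsq, hE']
  obtain ⟨p, _, hp⟩ := hex
  have he0 : 0 ≤ edgeCount col c (Dd p.1 p.2) :=
    Finset.sum_nonneg fun u _ => Finset.sum_nonneg fun v _ => hw0 u v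
  refine ⟨c, Dd p.1 p.2, (Finset.filter_subset _ _).trans hC, ?_, ?_⟩
  · refine le_of_sq_le_sq ?_ (Nat.cast_nonneg _)
    nlinarith [sq_nonneg (M : ℝ)]
  · nlinarith [sq_nonneg (M : ℝ)]

/-- Some pair `u < v` is joined in its own colour to a fixed proportion of `S` on its left and to
a fixed proportion of `S` on its right. -/
theorem exists_rich_edge (col : ℕ → ℕ → Bool) (S : Finset ℕ) (hS : 100000 ≤ S.card) :
    ∃ u ∈ S, ∃ v ∈ S, u < v ∧ S.card ≤ 8192 * (leftNbrs col S (col u v) u v).card ∧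
      S.card ≤ 8192 * (rightNbrs col S (col u v) u v).card := by
  by_contra hcon
  push Not at hcon
  have h : NoRichEdge col S (S.card / 8192) := by
    intro u hu v hv huv
    by_contra hno
    push Not at hno
    have h1 : S.card ≤ 8192 * (leftNbrs col S (col u v) u v).card := by
      have := hno.1
      rw [div_le_iff₀ (by norm_num)] at this
      have : (S.card : ℝ) ≤ ((8192 * (leftNbrs col S (col u v) u v).card : ℕ) : ℝ) := by
        push_cast; linarith
      exact_mod_cast this
    have h2 := hcon u hu v hv huv h1
    have := hno.2
    rw [div_le_iff₀ (by norm_num)] at this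
    have h3 : (S.card : ℝ) ≤ ((8192 * (rightNbrs col S (col u v) u v).card : ℕ) : ℝ) := by
      push_cast; linarith
    have h3' : S.card ≤ 8192 * (rightNbrs col S (col u v) u v).card := by exact_mod_cast h3
    omega
  set M := S.card / 5 with hM
  have hM1 : 5 * M ≤ S.card := by omega
  have hM2 : S.card ≤ 5 * M + 4 := by omega
  have hM3 : 20000 ≤ M := by omega
  have hM2' : (S.card : ℝ) ≤ 5 * M + 4 := by exact_mod_cast hM2
  have hM3' : (20000 : ℝ) ≤ M := by exact_mod_cast hM3
  have hδ : (S.card : ℝ) / 8192 ≤ M / 1600 := by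
    rw [div_le_div_iff₀ (by norm_num) (by norm_num)]; linarith
  obtain ⟨c, D, hDS, hDc, hDe⟩ := exists_sparse h M (by omega) hM1 (by positivity) hδ
  set q := D.card / 4 with hq
  have hq1 : 4 * q ≤ D.card := by omega
  have hq2 : D.card ≤ 4 * q + 3 := by omega
  have hq2' : (D.card : ℝ) ≤ 4 * q + 3 := by exact_mod_cast hq2
  have hq3 : (200 : ℝ) ≤ q := by linarith
  refine sparse_contra h c D hDS q ?_ hq1 ?_ ?_
  · have : (0 : ℝ) < q := by linarith
    exact_mod_cast this
  · refine hDe.trans ?_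
    have : (D.card : ℝ) ^ 2 ≤ (4 * q + 3) ^ 2 := pow_le_pow_left₀ (by positivity) hq2' 2
    nlinarith
  · linarith

/-! ### Labellings of pairs -/

/-- If labels increase along monochromatic triangles and the labels of colour `c` lie in an interval
starting at `lo c` with fewer than `2 ^ e c` elements, then `S` is bounded in terms of
`m = e true + e false`. Passing to one side of a rich pair lowers `m` by one. -/
theorem card_lt_of_mono_triangles (m : ℕ) : ∀ (S : Finset ℕ) (f : ℕ → ℕ → ℕ)
    (col : ℕ → ℕ → Bool) (lo e : Bool → ℕ), e true + e false = m →
    (∀ x ∈ S, ∀ y ∈ S, ∀ z ∈ S, x < y → y < z → col x z = col x y → col y z = col x y →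
      f x y < f y z) →
    (∀ x ∈ S, ∀ y ∈ S, x < y → lo (col x y) ≤ f x y ∧
      f x y + 1 < lo (col x y) + 2 ^ e (col x y)) →
    S.card < 100000 * 8192 ^ m := by
  induction m with
  | zero =>
    intro S f col lo e he _ hr
    by_contra hcon
    obtain ⟨u, hu, v, hv, huv, -, -⟩ := exists_rich_edge col S (by simpa using hcon)
    have h1 := hr u hu v hv huv
    have h2 : e (col u v) = 0 := by cases col u v <;> omega
    rw [h2] at h1
    omega
  | succ m ih =>
    intro S f col lo e he htri hr
    by_contra hcon
    push Not at hcon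
    have hbig : 100000 ≤ S.card :=
      le_trans (Nat.le_mul_of_pos_right _ (by positivity)) hcon
    obtain ⟨u, hu, v, hv, huv, hL, hR⟩ := exists_rich_edge col S hbig
    set c := col u v with hc
    set L := leftNbrs col S c u v with hLdef
    set R := rightNbrs col S c u v with hRdef
    rw [pow_succ] at hcon
    have hLc : 100000 * 8192 ^ m ≤ L.card := by omega
    have hRc : 100000 * 8192 ^ m ≤ R.card := by omega
    have hLm : ∀ x ∈ L, x ∈ S ∧ x < u ∧ col x u = c ∧ col x v = c := fun x hx =>
      Finset.mem_filter.mp hx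
    have hRm : ∀ x ∈ R, x ∈ S ∧ v < x ∧ col u x = c ∧ col v x = c := fun x hx =>
      Finset.mem_filter.mp hx
    have huvr := hr u hu v hv huv
    rw [← hc] at huvr
    have hec : 1 ≤ e c := by
      by_contra h0
      have : e c = 0 := by omega
      rw [this] at huvr
      omega
    have hpow : 2 ^ e c = 2 ^ (e c - 1) + 2 ^ (e c - 1) := by
      obtain ⟨k, hk⟩ : ∃ k, e c = k + 1 := ⟨e c - 1, by omega⟩
      rw [hk, Nat.add_sub_cancel, pow_succ]; omega
    have he' : Function.update e c (e c - 1) true + Function.update e c (e c - 1) false = m := by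
      generalize c = c at *
      cases c <;> simp <;> omega
    by_cases hmid : f u v ≤ lo c + 2 ^ (e c - 1)
    · refine absurd (ih L f col lo (Function.update e c (e c - 1)) he' ?_ ?_) (by omega)
      · exact fun x hx y hy z hz => htri x (hLm x hx).1 y (hLm y hy).1 z (hLm z hz).1
      · intro x hx y hy hxy
        obtain ⟨hxS, hxu, hxc, hxc'⟩ := hLm x hx
        obtain ⟨hyS, hyu, hyc, hyc'⟩ := hLm y hy
        have hxyr := hr x hxS y hyS hxy
        by_cases hcc : col x y = c
        · rw [hcc, Function.update_self]
          rw [hcc] at hxyr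
          have t1 := htri x hxS y hyS u hu hxy hyu (by rw [hxc, hcc]) (by rw [hyc, hcc])
          have t2 := htri y hyS u hu v hv hyu huv (by rw [hyc', hyc]) (by rw [← hc, hyc])
          omega
        · rwa [Function.update_of_ne hcc]
    · refine absurd (ih R f col (Function.update lo c (lo c + 2 ^ (e c - 1)))
        (Function.update e c (e c - 1)) he' ?_ ?_) (by omega)
      · exact fun x hx y hy z hz => htri x (hRm x hx).1 y (hRm y hy).1 z (hRm z hz).1
      · intro x hx y hy hxy
        obtain ⟨hxS, hvx, hxc, hxc'⟩ := hRm x hx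
        obtain ⟨hyS, hvy, hyc, hyc'⟩ := hRm y hy
        have hxyr := hr x hxS y hyS hxy
        by_cases hcc : col x y = c
        · rw [hcc, Function.update_self, Function.update_self]
          rw [hcc] at hxyr
          have t1 := htri u hu v hv x hxS huv hvx (by rw [hxc, hc]) (by rw [hxc', hc])
          have t2 := htri v hv x hxS y hyS hvx hxy (by rw [hxc', hyc']) (by rw [hxc', hcc])
          omega
        · rwa [Function.update_of_ne hcc, Function.update_of_ne hcc]

lemma exists_blocks (M : ℕ) (t : ℕ) : ∀ V : Finset ℕ, t * M ≤ V.card →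
    ∃ B : ℕ → Finset ℕ, (∀ i < t, B i ⊆ V ∧ (B i).card = M) ∧
      ∀ i, i + 1 < t → ∀ a ∈ B i, ∀ b ∈ B (i + 1), a < b := by
  induction t with
  | zero => exact fun V _ => ⟨fun _ => ∅, by simp, by simp⟩
  | succ t ih =>
    intro V hV
    obtain ⟨A, V', hA, hV', hAc, hV'c, hlt⟩ := exists_split V M (t * M)
      (by rw [add_mul] at hV; omega)
    obtain ⟨B, hB, hBlt⟩ := ih V' hV'c
    refine ⟨fun i => Nat.casesOn i A B, ?_, ?_⟩
    · rintro (_ | i) hi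
      · exact ⟨hA, hAc⟩
      · exact ⟨(hB i (by omega)).1.trans hV', (hB i (by omega)).2⟩
    · rintro (_ | i) hi a ha b hb
      · exact hlt a ha b ((hB 0 (by omega)).1 hb)
      · exact hBlt i (by omega) a ha b hb

/-- Among the `2n + 2` average labels between consecutive blocks, some increment is below `1 / 2`.
Averaging over the two outer of the corresponding three blocks produces `a` and `d` with
`g x d ≤ g a x` for many `x` in the middle one; then the most popular value `t` of `g a x` is
chosen. -/
lemma exists_sandwich (g : ℕ → ℕ → ℕ) (n M : ℕ) (hn : 0 < n) (hM : 0 < M)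
    (hg : ∀ x y, g x y < n) (V : Finset ℕ) (hV : (2 * n + 3) * M ≤ V.card) :
    ∃ a ∈ V, ∃ d ∈ V, ∃ t, ∃ S ⊆ V, (∀ x ∈ S, a < x ∧ x < d ∧ g a x = t ∧ g x d ≤ t) ∧
      M ≤ 2 * n * (n + 1) * S.card := by
  obtain ⟨B, hB, hlt⟩ := exists_blocks M (2 * n + 3) V hV
  have hMr : (0 : ℝ) < M := by exact_mod_cast hM
  set E : ℕ → ℝ := fun i => ∑ x ∈ B i, ∑ y ∈ B (i + 1), (g x y : ℝ) with hE
  have hstep : ∃ i ≤ 2 * n, E (i + 1) < E i + (M : ℝ) ^ 2 / 2 := by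
    by_contra hcon
    push Not at hcon
    have hind : ∀ i ≤ 2 * n + 1, (i : ℝ) * ((M : ℝ) ^ 2 / 2) ≤ E i := by
      intro i
      induction i with
      | zero =>
        intro _
        simp only [Nat.cast_zero, zero_mul, hE]
        positivity
      | succ i ih =>
        intro hi
        have := ih (by omega)
        have := hcon i (by omega)
        push_cast
        linarith
    have h1 := hind (2 * n + 1) le_rfl
    have h2 : E (2 * n + 1) ≤ ∑ x ∈ B (2 * n + 1), ∑ y ∈ B (2 * n + 1 + 1), (n : ℝ) := by
      simp only [hE]
      gcongr with x _ y _
      exact (hg x y).le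
    simp only [Finset.sum_const, (hB (2 * n + 1) (by omega)).2,
      (hB (2 * n + 1 + 1) (by omega)).2, nsmul_eq_mul] at h2
    push_cast at h1
    nlinarith [sq_nonneg (M : ℝ), mul_pos hMr hMr]
  obtain ⟨i, hi, hEi⟩ := hstep
  have c0 := (hB i (by omega)).2
  have c1 := (hB (i + 1) (by omega)).2
  have c2 := (hB (i + 2) (by omega)).2
  have hex : ∃ a ∈ B i, ∃ d ∈ B (i + 2),
      ∑ x ∈ B (i + 1), ((g x d : ℝ) - g a x) < (M : ℝ) / 2 := by
    by_contra hcon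
    push Not at hcon
    have h1 : ∑ a ∈ B i, ∑ d ∈ B (i + 2), (M : ℝ) / 2 ≤
        ∑ a ∈ B i, ∑ d ∈ B (i + 2), ∑ x ∈ B (i + 1), ((g x d : ℝ) - g a x) :=
      Finset.sum_le_sum fun a ha => Finset.sum_le_sum fun d hd => hcon a ha d hd
    have h2 : ∑ a ∈ B i, ∑ d ∈ B (i + 2), ∑ x ∈ B (i + 1), ((g x d : ℝ) - g a x)
        = M * (E (i + 1) - E i) := by
      have s1 : ∑ d ∈ B (i + 2), ∑ x ∈ B (i + 1), (g x d : ℝ) = E (i + 1) := Finset.sum_comm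
      simp only [Finset.sum_sub_distrib, s1, Finset.sum_const, c0, c2, nsmul_eq_mul,
        ← Finset.mul_sum]
      simp only [hE]; ring
    rw [h2] at h1
    simp only [Finset.sum_const, c0, c2, nsmul_eq_mul] at h1
    have h3 : (M : ℝ) * (M * (M / 2)) = M * ((M : ℝ) ^ 2 / 2) := by ring
    rw [h3] at h1
    have := le_of_mul_le_mul_left h1 hMr
    linarith
  obtain ⟨a, ha, d, hd, had⟩ := hex
  set X := (B (i + 1)).filter fun x => g x d ≤ g a x with hX
  -- An integer `g x d - g a x` is at least `1` off `X` and at least `-n` on `X`.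
  have hXcard : M ≤ 2 * (n + 1) * X.card := by
    have hpt : ∑ x ∈ B (i + 1), ((1 : ℝ) - (n + 1) * (if g x d ≤ g a x then 1 else 0)) ≤
        ∑ x ∈ B (i + 1), ((g x d : ℝ) - g a x) := by
      refine Finset.sum_le_sum fun x _ => ?_
      split_ifs with h
      · have h1 : (g a x : ℝ) ≤ n := by exact_mod_cast (hg a x).le
        have h2 : (0 : ℝ) ≤ g x d := by positivity
        linarith
      · have h1 : (g a x : ℝ) + 1 ≤ g x d := by exact_mod_cast (by omega : g a x + 1 ≤ g x d)
        linarith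
    rw [Finset.sum_sub_distrib, ← Finset.mul_sum, ← Finset.sum_filter, ← hX] at hpt
    simp only [Finset.sum_const, c1, nsmul_eq_mul, mul_one] at hpt
    have : (M : ℝ) ≤ ((2 * (n + 1) * X.card : ℕ) : ℝ) := by push_cast; linarith
    exact_mod_cast this
  obtain ⟨t, ht, hfib⟩ : ∃ t ∈ Finset.range n,
      X.card ≤ n * (X.filter fun x => g a x = t).card := by
    by_contra hcon
    push Not at hcon
    have h1 := Finset.card_eq_sum_card_fiberwise (s := X) (t := Finset.range n)
      (f := fun x => g a x) (fun x _ => by simpa using hg a x)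
    have h2 : ∑ t ∈ Finset.range n, n * (X.filter fun x => g a x = t).card
        < ∑ t ∈ Finset.range n, X.card :=
      Finset.sum_lt_sum_of_nonempty ⟨0, by simpa using hn⟩ fun t ht => hcon t ht
    rw [← Finset.mul_sum, ← h1] at h2
    simp at h2
  refine ⟨a, (hB i (by omega)).1 ha, d, (hB (i + 2) (by omega)).1 hd, t,
    X.filter fun x => g a x = t, ?_, ?_, ?_⟩
  · exact ((Finset.filter_subset _ _).trans (Finset.filter_subset _ _)).trans
      (hB (i + 1) (by omega)).1
  · intro x hx
    rw [Finset.mem_filter, hX, Finset.mem_filter] at hx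
    obtain ⟨⟨hx1, hx2⟩, hx3⟩ := hx
    exact ⟨hlt i (by omega) a ha x hx1, hlt (i + 1) (by omega) x hx1 d hd, hx3, hx3 ▸ hx2⟩
  · calc M ≤ 2 * (n + 1) * X.card := hXcard
      _ ≤ 2 * (n + 1) * (n * (X.filter fun x => g a x = t).card) := Nat.mul_le_mul_left _ hfib
      _ = _ := by ring

/-- The case `k = 3`: the four conclusions are the inequalities of `MonoClique` for the four
triples `abc`, `abd`, `bcd`, `acd`. -/
theorem exists_four (g : ℕ → ℕ → ℕ) (n : ℕ) (hn : 2 ^ 48 ≤ n)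
    (hg : ∀ x y, g x y < n) (V : Finset ℕ) (hV : n ^ 30 ≤ V.card) :
    ∃ a ∈ V, ∃ b ∈ V, ∃ c ∈ V, ∃ d ∈ V, a < b ∧ b < c ∧ c < d ∧
      g b c ≤ g a b ∧ g b d ≤ g a b ∧ g c d ≤ g b c ∧ g c d ≤ g a c := by
  by_contra hcon
  push Not at hcon
  set i := Nat.log 2 n + 1 with hi
  have hn0 : 0 < n := lt_of_lt_of_le (by norm_num) hn
  have hi1 : n < 2 ^ i := Nat.lt_pow_succ_log_self (by norm_num) n
  have hi2 : 2 ^ i ≤ 2 * n := by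
    rw [hi, pow_succ, mul_comm]
    exact Nat.mul_le_mul_left 2 (Nat.pow_log_le_self 2 (by omega))
  set K := 100000 * 8192 ^ (i + i) with hK
  have hKle : K ≤ 100000 * (2 * n) ^ 26 := by
    have : 8192 ^ (i + i) = (2 ^ i) ^ 26 := by
      rw [show (8192 : ℕ) = 2 ^ 13 by norm_num, ← pow_mul, ← pow_mul]
      congr 1; ring
    rw [hK, this]
    exact Nat.mul_le_mul_left _ (Nat.pow_le_pow_left hi2 26)
  have hK0 : 0 < K := by positivity
  have hVbig : (2 * n + 3) * (2 * n * (n + 1) * K) ≤ V.card := by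
    refine le_trans ?_ hV
    calc (2 * n + 3) * (2 * n * (n + 1) * K)
        ≤ (5 * n) * (2 * n * (2 * n) * (100000 * (2 * n) ^ 26)) := by
          gcongr <;> omega
      _ = (20 * 100000 * 2 ^ 26) * n ^ 29 := by ring
      _ ≤ n * n ^ 29 := Nat.mul_le_mul_right _ (le_trans (by norm_num) hn)
      _ = n ^ 30 := by ring
  obtain ⟨a, ha, d, hd, t, S, hSV, hS, hcard⟩ := exists_sandwich g n (2 * n * (n + 1) * K) hn0
    (by positivity) hg V hVbig
  have hSK : K ≤ S.card := Nat.le_of_mul_le_mul_left hcard (by positivity)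
  refine absurd (card_lt_of_mono_triangles (i + i) S g (fun x y => decide (t ≤ g x y))
    (fun _ => 0) (fun _ => i) rfl ?_ ?_) (by omega)
  · intro x hx y hy z hz hxy hyz h1 h2
    obtain ⟨ax, xd, gax, gxd⟩ := hS x hx
    obtain ⟨ay, yd, gay, gyd⟩ := hS y hy
    obtain ⟨az, zd, gaz, gzd⟩ := hS z hz
    by_contra hle
    rw [decide_eq_decide] at h1 h2
    -- A high triangle is completed by `d`, a low one by `a`.
    by_cases ht : t ≤ g x y
    · have t1 := h1.mpr ht
      have t2 := h2.mpr ht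
      have := hcon x (hSV hx) y (hSV hy) z (hSV hz) d hd hxy hyz zd
        (by omega) (by omega) (by omega)
      omega
    · have t1 := mt h1.mp ht
      have t2 := mt h2.mp ht
      have := hcon a ha x (hSV hx) y (hSV hy) z (hSV hz) ax hxy hyz
        (by omega) (by omega) (by omega)
      omega
  · intro x _ y _ _
    have := hg x y
    exact ⟨Nat.zero_le _, by omega⟩

/-! ### Stepping up -/

/-- On `W`, deleting the largest element of an `(m + 2)`-set never gives a smaller value of `f`
than deleting its smallest element: here the `(m + 2)`-set is `T ∪ {a, b}`, with `a` its minimum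
and `b` its maximum. -/
def MonoClique (m : ℕ) (f : Finset ℕ → ℕ) (W : Finset ℕ) : Prop :=
  ∀ T a b, T.card = m → a ∈ W → b ∈ W → T ⊆ W → (∀ t ∈ T, a < t ∧ t < b) → a < b →
    f (insert b T) ≤ f (insert a T)

/-- Every labelling of finite sets by `{0, …, n - 1}` has, inside every set of `N` vertices, a
`MonoClique` on `m + 3` vertices. Only the labels of `(m + 1)`-sets matter. -/
def Forces (m N n : ℕ) : Prop :=
  ∀ f : Finset ℕ → ℕ, (∀ s, f s < n) → ∀ V : Finset ℕ, N ≤ V.card →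
    ∃ W ⊆ V, W.card = m + 3 ∧ MonoClique m f W

theorem Forces.mono {m N N' n : ℕ} (h : Forces m N n) (hN : N ≤ N') : Forces m N' n :=
  fun f hf V hV => h f hf V (hN.trans hV)

theorem forces_one (n : ℕ) (hn : 2 ^ 48 ≤ n) : Forces 1 (n ^ 30) n := by
  intro f hf V hV
  obtain ⟨a, ha, b, hb, c, hc, d, hd, hab, hbc, hcd, h1, h2, h3, h4⟩ :=
    exists_four (fun x y => f {x, y}) n hn (fun x y => hf _) V hV
  refine ⟨{a, b, c, d}, ?_, ?_, ?_⟩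
  · intro x hx
    simp only [Finset.mem_insert, Finset.mem_singleton] at hx
    rcases hx with rfl | rfl | rfl | rfl <;> assumption
  · rw [Finset.card_insert_of_notMem, Finset.card_insert_of_notMem,
      Finset.card_insert_of_notMem, Finset.card_singleton] <;>
    simp only [Finset.mem_insert, Finset.mem_singleton] <;> omega
  · intro T x z hT hx hz hTW hTxz hxz
    obtain ⟨y, rfl⟩ := Finset.card_eq_one.mp hT
    have hy := Finset.singleton_subset_iff.mp hTW
    obtain ⟨hxy, hyz⟩ := hTxz y (Finset.mem_singleton_self y)
    rw [Finset.pair_comm z y]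
    simp only [Finset.mem_insert, Finset.mem_singleton] at hx hy hz
    rcases hy with rfl | rfl | rfl | rfl
    · omega
    · obtain rfl : x = a := by omega
      rcases hz with rfl | rfl | rfl | rfl
      · omega
      · omega
      · exact h1
      · exact h2
    · obtain rfl : z = d := by omega
      rcases hx with rfl | rfl | rfl | rfl
      · exact h4
      · exact h3
      · omega
      · omega
    · omega

/-- The data of an Erdős–Rado construction: `A` precedes the reservoir `S`, and the label of an
`(m + 2)`-set whose first `m + 1` elements lie in `A` does not depend on its last element, as long
as that element lies in `A ∪ S`. -/
def EndHomogeneous (m : ℕ) (f : Finset ℕ → ℕ) (A S : Finset ℕ) : Prop :=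
  (∀ a ∈ A, ∀ s ∈ S, a < s) ∧
    ∀ T ⊆ A, T.card = m + 1 → ∀ x ∈ A ∪ S, (∀ t ∈ T, t < x) → ∀ y ∈ S,
      f (insert x T) = f (insert y T)

/-- One step of the construction: the least element of the reservoir is moved to `A` and the
reservoir shrinks by a factor of at most `(2 * n) ^ (M ^ m)`. -/
theorem EndHomogeneous.step {m n M : ℕ} {f : Finset ℕ → ℕ} (hf : ∀ s, f s < n)
    {A S : Finset ℕ} (h : EndHomogeneous m f A S) (hA : A.card ≤ M) {R : ℕ} (hR : 1 ≤ R)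
    (hM : 1 ≤ M) (hS : (2 * n) ^ (M ^ m) * R ≤ S.card) :
    ∃ A' ⊆ A ∪ S, ∃ S' ⊆ A ∪ S, A'.card = A.card + 1 ∧ R ≤ S'.card ∧ EndHomogeneous m f A' S' := by
  have hn : 0 < n := lt_of_le_of_lt (Nat.zero_le _) (hf ∅)
  set Q := M ^ m with hQ
  have hQ1 : 1 ≤ Q := Nat.one_le_pow _ _ hM
  have hpow : (2 * n) ^ Q = 2 ^ Q * n ^ Q := mul_pow _ _ _
  have h2Q : 2 ≤ 2 ^ Q := by
    calc 2 = 2 ^ 1 := by norm_num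
      _ ≤ 2 ^ Q := Nat.pow_le_pow_right (by norm_num) hQ1
  have hnQ : 1 ≤ n ^ Q := Nat.one_le_pow _ _ hn
  have hbig : 2 * (n ^ Q * R) ≤ S.card := by
    calc 2 * (n ^ Q * R) ≤ 2 ^ Q * (n ^ Q * R) := Nat.mul_le_mul_right _ h2Q
      _ = (2 * n) ^ Q * R := by rw [hpow]; ring
      _ ≤ S.card := hS
  have hnR : 1 ≤ n ^ Q * R := Nat.mul_pos hnQ hR
  have hSne : S.Nonempty := Finset.card_pos.mp (by omega)
  set x₀ := S.min' hSne with hx₀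
  have hx₀S : x₀ ∈ S := S.min'_mem hSne
  have hx₀A : x₀ ∉ A := fun hh => lt_irrefl _ (h.1 x₀ hh x₀ hx₀S)
  have hlt : ∀ s ∈ S.erase x₀, x₀ < s := fun s hs =>
    lt_of_le_of_ne (S.min'_le s (Finset.mem_of_mem_erase hs)) (Finset.ne_of_mem_erase hs).symm
  -- The number of label patterns of the sets `{x₀, x} ∪ T`, `T` an `m`-subset of `A`.
  have hpat : ((A.powersetCard m).pi fun _ => Finset.range n).card ≤ n ^ Q := by
    rw [Finset.card_pi, Finset.prod_const, Finset.card_range, Finset.card_powersetCard]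
    exact Nat.pow_le_pow_right hn ((Nat.choose_le_pow _ _).trans (Nat.pow_le_pow_left hA _))
  obtain ⟨p, -, hp⟩ := Finset.exists_le_card_fiber_of_mul_le_card_of_maps_to
    (s := S.erase x₀) (t := (A.powersetCard m).pi fun _ => Finset.range n)
    (f := fun x T _ => f (insert x (insert x₀ T))) (n := R)
    (fun x _ => Finset.mem_pi.mpr fun T _ => Finset.mem_range.mpr (hf _))
    ⟨fun _ _ => 0, Finset.mem_pi.mpr fun T _ => Finset.mem_range.mpr hn⟩
    (by
      rw [Finset.card_erase_of_mem hx₀S]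
      have := Nat.mul_le_mul_right R hpat
      omega)
  refine ⟨insert x₀ A, ?_, _, ?_, Finset.card_insert_of_notMem hx₀A, hp, ?_, ?_⟩
  · intro z hz
    rcases Finset.mem_insert.mp hz with rfl | hz
    · exact Finset.mem_union_right _ hx₀S
    · exact Finset.mem_union_left _ hz
  · intro z hz
    exact Finset.mem_union_right _ (Finset.mem_of_mem_erase (Finset.mem_filter.mp hz).1)
  · intro a ha s hs
    have hs' := (Finset.mem_filter.mp hs).1
    rcases Finset.mem_insert.mp ha with rfl | ha
    · exact hlt s hs'
    · exact h.1 a ha s (Finset.mem_of_mem_erase hs')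
  · intro T hT hcard x hx hTx y hy
    obtain ⟨hyS, hyp⟩ := Finset.mem_filter.mp hy
    by_cases hxT : x₀ ∈ T
    · have hxS : x ∈ Finset.filter
          (fun x => (fun T (_ : T ∈ A.powersetCard m) => f (insert x (insert x₀ T))) = p)
          (S.erase x₀) := by
        rcases Finset.mem_union.mp hx with hx | hx
        · have := hTx x₀ hxT
          rcases Finset.mem_insert.mp hx with rfl | hx
          · omega
          · have := h.1 x hx x₀ hx₀S
            omega
        · exact hx
      have hxp := (Finset.mem_filter.mp hxS).2
      have hT0 : T.erase x₀ ∈ A.powersetCard m := by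
        rw [Finset.mem_powersetCard, Finset.card_erase_of_mem hxT, hcard]
        refine ⟨fun z hz => ?_, by omega⟩
        rcases Finset.mem_insert.mp (hT (Finset.mem_of_mem_erase hz)) with hz' | hz'
        · exact absurd hz' (Finset.ne_of_mem_erase hz)
        · exact hz'
      have := congrFun (congrFun (hxp.trans hyp.symm) (T.erase x₀)) hT0
      simpa only [Finset.insert_erase hxT] using this
    · have hTA : T ⊆ A := by
        intro z hz
        rcases Finset.mem_insert.mp (hT hz) with rfl | hz'
        · exact absurd hz hxT
        · exact hz'
      refine h.2 T hTA hcard x ?_ hTx y (Finset.mem_of_mem_erase hyS)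
      rcases Finset.mem_union.mp hx with hx | hx
      · rcases Finset.mem_insert.mp hx with rfl | hx
        · exact Finset.mem_union_right _ hx₀S
        · exact Finset.mem_union_left _ hx
      · exact Finset.mem_union_right _ (Finset.mem_of_mem_erase (Finset.mem_filter.mp hx).1)

theorem EndHomogeneous.iterate {m n M : ℕ} {f : Finset ℕ → ℕ} (hf : ∀ s, f s < n) (hM : 1 ≤ M)
    (j : ℕ) : ∀ A S : Finset ℕ, EndHomogeneous m f A S → A.card + j ≤ M →
      ((2 * n) ^ (M ^ m)) ^ j ≤ S.card →
      ∃ A' ⊆ A ∪ S, ∃ S' ⊆ A ∪ S, A'.card = A.card + j ∧ 1 ≤ S'.card ∧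
        EndHomogeneous m f A' S' := by
  have hn : 0 < n := lt_of_le_of_lt (Nat.zero_le _) (hf ∅)
  induction j with
  | zero =>
    intro A S h _ hS
    exact ⟨A, Finset.subset_union_left, S, Finset.subset_union_right, rfl, by simpa using hS, h⟩
  | succ j ih =>
    intro A S h hA hS
    obtain ⟨A₁, hA₁, S₁, hS₁, hc₁, hR₁, h₁⟩ := h.step hf (M := M) (by omega)
      (R := ((2 * n) ^ (M ^ m)) ^ j) (Nat.one_le_iff_ne_zero.mpr (by positivity)) hM
      (by rw [← pow_succ']; exact hS)
    obtain ⟨A₂, hA₂, S₂, hS₂, hc₂, hR₂, h₂⟩ := ih A₁ S₁ h₁ (by omega) hR₁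
    have hsub : A₁ ∪ S₁ ⊆ A ∪ S := Finset.union_subset hA₁ hS₁
    exact ⟨A₂, hA₂.trans hsub, S₂, hS₂.trans hsub, by omega, hR₂, h₂⟩

/-- An end-homogeneous set `A` of size `M` with a vertex `v` after it reduces the problem for
`f` to the one for `s ↦ f ({v} ∪ s)` on `A`. -/
theorem Forces.step {m M n : ℕ} (h : Forces m M n) (hM : 1 ≤ M) :
    Forces (m + 1) ((2 * n) ^ (M ^ (m + 1))) n := by
  intro f hf V hV
  have h0 : EndHomogeneous m f ∅ V := by
    refine ⟨fun a ha => absurd ha (Finset.notMem_empty a), fun T hT hc => ?_⟩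
    rw [Finset.subset_empty.mp hT, Finset.card_empty] at hc
    omega
  obtain ⟨A, hA, S, hS, hcA, hcS, hAS⟩ := EndHomogeneous.iterate hf hM M ∅ V h0 (by simp)
    (by rw [← pow_mul, ← pow_succ]; exact hV)
  rw [Finset.empty_union] at hA hS
  rw [Finset.card_empty, zero_add] at hcA
  obtain ⟨v, hv⟩ := Finset.card_pos.mp hcS
  obtain ⟨W, hWA, hWc, hW⟩ := h (fun s => f (insert v s)) (fun s => hf _) A hcA.ge
  have hvW : ∀ w ∈ W, w < v := fun w hw => hAS.1 w (hWA hw) v hv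
  refine ⟨insert v W, ?_, ?_, ?_⟩
  · intro z hz
    rcases Finset.mem_insert.mp hz with rfl | hz
    · exact hS hv
    · exact hA (hWA hz)
  · rw [Finset.card_insert_of_notMem (fun hh => lt_irrefl _ (hvW v hh)), hWc]
  · intro T a b hT ha hb hTW hTab hab
    have hbv : b ≤ v := by
      rcases Finset.mem_insert.mp hb with rfl | hb
      · exact le_rfl
      · exact (hvW b hb).le
    have mem_W : ∀ z ∈ insert v W, z < b → z ∈ W := by
      intro z hz hzb
      rcases Finset.mem_insert.mp hz with rfl | hz
      · omega
      · exact hz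
    have haW := mem_W a ha hab
    have hTW' : T ⊆ W := fun z hz => mem_W z (hTW hz) (hTab z hz).2
    have hbAS : b ∈ A ∪ S := by
      rcases Finset.mem_insert.mp hb with rfl | hb
      · exact Finset.mem_union_right _ hv
      · exact Finset.mem_union_left _ (hWA hb)
    have hTne : T.Nonempty := Finset.card_pos.mp (by omega)
    set t := T.max' hTne with ht
    have htT : t ∈ T := T.max'_mem hTne
    have hTt : ∀ z ∈ T.erase t, z < t := fun z hz =>
      lt_of_le_of_ne (T.le_max' z (Finset.mem_of_mem_erase hz)) (Finset.ne_of_mem_erase hz)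
    have haT : a ∉ T.erase t := fun hh => lt_irrefl _ (hTab a (Finset.mem_of_mem_erase hh)).1
    have hcT : (T.erase t).card = m := by rw [Finset.card_erase_of_mem htT, hT]; rfl
    have e1 : f (insert b T) = f (insert v T) :=
      hAS.2 T (hTW'.trans hWA) hT b hbAS (fun z hz => (hTab z hz).2) v hv
    have e2 : f (insert t (insert a (T.erase t))) = f (insert v (insert a (T.erase t))) := by
      refine hAS.2 _ ?_ ?_ t (Finset.mem_union_left _ (hWA (hTW' htT))) ?_ v hv
      · intro z hz
        rcases Finset.mem_insert.mp hz with rfl | hz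
        · exact hWA haW
        · exact hWA (hTW' (Finset.mem_of_mem_erase hz))
      · rw [Finset.card_insert_of_notMem haT, hcT]
      · intro z hz
        rcases Finset.mem_insert.mp hz with rfl | hz
        · exact (hTab t htT).1
        · exact hTt z hz
    have e3 : insert t (insert a (T.erase t)) = insert a T := by
      rw [Finset.insert_comm, Finset.insert_erase htT]
    have key := hW (T.erase t) a t hcT haW (hTW' htT)
      (fun z hz => hTW' (Finset.mem_of_mem_erase hz))
      (fun z hz => ⟨(hTab z (Finset.mem_of_mem_erase hz)).1, hTt z hz⟩) (hTab t htT).1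
    simp only [Finset.insert_erase htT] at key
    rw [e1, ← e3, e2]
    exact key

/-! ### Tower bounds -/

theorem twr_succ_succ (i x : ℕ) : twr (i + 2) x = 2 ^ twr (i + 1) x := by
  simp only [twr, Nat.add_sub_cancel, show i + 2 - 1 = i + 1 by omega,
    Function.iterate_succ_apply']

theorem twr_one (x : ℕ) : twr 1 x = x := rfl

theorem twr_lt_twr (i : ℕ) {x y : ℕ} (h : x < y) : twr (i + 1) x < twr (i + 1) y := by
  induction i with
  | zero => exact h
  | succ i ih =>
    rw [twr_succ_succ, twr_succ_succ]
    exact Nat.pow_lt_pow_right (by norm_num) ih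

theorem le_twr (i x : ℕ) : x ≤ twr (i + 1) x := by
  induction i with
  | zero => exact le_rfl
  | succ i ih =>
    rw [twr_succ_succ]
    exact ih.trans Nat.lt_two_pow_self.le

theorem mul_twr_le (i c x : ℕ) (hx : 1 ≤ x) (hc : 1 ≤ c) :
    c * twr (i + 1) x ≤ twr (i + 1) (c * x) := by
  induction i with
  | zero => exact le_rfl
  | succ i ih =>
    rw [twr_succ_succ, twr_succ_succ]
    have h1 : 1 ≤ twr (i + 1) x := hx.trans (le_twr i x)
    have h2 : c ≤ 2 ^ (c - 1) := by
      have := Nat.lt_two_pow_self (n := c - 1)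
      omega
    calc c * 2 ^ twr (i + 1) x ≤ 2 ^ (c - 1) * 2 ^ twr (i + 1) x := Nat.mul_le_mul_right _ h2
      _ = 2 ^ (c - 1 + twr (i + 1) x) := (pow_add _ _ _).symm
      _ ≤ 2 ^ twr (i + 1) (c * x) := by
        refine Nat.pow_le_pow_right (by norm_num) (le_trans ?_ ih)
        obtain ⟨d, rfl⟩ := Nat.exists_eq_add_of_le hc
        rw [Nat.add_sub_cancel_left, add_mul, one_mul, add_comm]
        have := Nat.mul_le_mul_left d h1
        omega

theorem forces_two (n : ℕ) (hn : 2 ^ 48 ≤ n) : Forces 2 (2 ^ (n ^ 61)) n := by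
  refine (Forces.step (forces_one n hn) (Nat.one_le_pow _ _ (by omega))).mono ?_
  have h1 : 2 * n ≤ 2 ^ n := by
    calc 2 * n ≤ 2 * 2 ^ (n - 1) := by
          have := Nat.lt_two_pow_self (n := n - 1)
          omega
      _ = 2 ^ n := by rw [← pow_succ']; congr 1; omega
  calc (2 * n) ^ ((n ^ 30) ^ (1 + 1)) ≤ (2 ^ n) ^ ((n ^ 30) ^ (1 + 1)) := Nat.pow_le_pow_left h1 _
    _ = 2 ^ (n ^ 61) := by rw [← pow_mul]; congr 1; ring

/-- Each stepping-up costs one exponential and a constant factor at the top of the tower. -/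
theorem forces_twr (i : ℕ) : ∃ c ≥ 1, ∀ n, 2 ^ 48 ≤ n →
    Forces (i + 2) (twr (i + 2) (c * n ^ 61)) n := by
  induction i with
  | zero =>
    refine ⟨1, le_rfl, fun n hn => ?_⟩
    rw [twr_succ_succ, zero_add, twr_one, one_mul]
    exact forces_two n hn
  | succ i ih =>
    obtain ⟨c, hc, h⟩ := ih
    refine ⟨(i + 4) * c, Nat.mul_pos (by omega) hc, fun n hn => ?_⟩
    set x := c * n ^ 61 with hx
    have hn0 : 0 < n := by omega
    have hnx : n ≤ x := by
      calc n = 1 * n ^ 1 := by ring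
        _ ≤ c * n ^ 61 := Nat.mul_le_mul hc (Nat.pow_le_pow_right hn0 (by norm_num))
    have hM : 2 * n ≤ twr (i + 2) x := by
      rw [twr_succ_succ]
      have h1 := le_twr i x
      have h2 := Nat.lt_two_pow_self (n := twr (i + 1) x - 1)
      have h3 : 2 ^ twr (i + 1) x = 2 * 2 ^ (twr (i + 1) x - 1) := by
        rw [← pow_succ']; congr 1; omega
      omega
    have hM1 : 1 ≤ twr (i + 2) x := by omega
    refine (Forces.step (h n hn) hM1).mono ?_
    have hself : 2 * n ≤ 2 ^ twr (i + 2) x := hM.trans Nat.lt_two_pow_self.le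
    calc (2 * n) ^ (twr (i + 2) x ^ (i + 2 + 1))
        ≤ (2 ^ twr (i + 2) x) ^ (twr (i + 2) x ^ (i + 2 + 1)) := Nat.pow_le_pow_left hself _
      _ = 2 ^ (twr (i + 2) x ^ (i + 4)) := by rw [← pow_mul]; congr 1; ring
      _ ≤ 2 ^ twr (i + 1 + 1) ((i + 4) * c * n ^ 61) := by
        refine Nat.pow_le_pow_right (by norm_num) ?_
        rw [twr_succ_succ, ← pow_mul, twr_succ_succ]
        refine Nat.pow_le_pow_right (by norm_num) ?_
        rw [mul_comm, mul_assoc, ← hx]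
        exact mul_twr_le i (i + 4) x (by omega) (by omega)
      _ = twr (i + 1 + 2) ((i + 4) * c * n ^ 61) := (twr_succ_succ _ _).symm

theorem forces_twr_sub_one (m : ℕ) : ∃ n₀, ∀ n, n₀ ≤ n →
    1 ≤ n ∧ 1 ≤ twr (m + 1) (n ^ 62) ∧ Forces (m + 1) (twr (m + 1) (n ^ 62) - 1) n := by
  rcases m with _ | i
  · refine ⟨2 ^ 48, fun n hn => ?_⟩
    have hlt : n ^ 30 < n ^ 62 := Nat.pow_lt_pow_right (by omega) (by norm_num)
    rw [zero_add, twr_one]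
    exact ⟨by omega, by omega, (forces_one n hn).mono (by omega)⟩
  · obtain ⟨c, -, h⟩ := forces_twr i
    refine ⟨2 ^ 48 + c, fun n hn => ?_⟩
    have hlt : c * n ^ 61 < n ^ 62 := by
      rw [show n ^ 62 = n * n ^ 61 by ring]
      exact Nat.mul_lt_mul_of_pos_right (by omega) (Nat.pow_pos (by omega))
    have := twr_lt_twr (i + 1) hlt
    exact ⟨by omega, by omega, (h n (by omega)).mono (Nat.le_sub_one_of_lt this)⟩

/-! ### From labels to red cliques -/

/-- There is a blue tight path of uniformity `m + 2` with `ℓ` edges inside `{1, …, N}` whose last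
`m + 1` vertices form the set `T`. As in `HasBlueTightPath`, the path is the initial part of an
infinite increasing sequence. -/
def BluePathTo (m N : ℕ) (χ : Finset ℕ → Bool) (ℓ : ℕ) (T : Finset ℕ) : Prop :=
  ∃ x : ℕ → ℕ, StrictMono x ∧ (∀ i < ℓ + (m + 1), x i ∈ Finset.Icc 1 N) ∧
    (∀ j < ℓ, χ ((Finset.range (m + 2)).image fun i => x (j + i)) = false) ∧
    ((Finset.range (m + 1)).image fun i => x (ℓ + i)) = T

theorem bluePathTo_zero {m N : ℕ} {χ : Finset ℕ → Bool} {T : Finset ℕ}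
    (hT : T ⊆ Finset.Icc 1 N) (hc : T.card = m + 1) : BluePathTo m N χ 0 T := by
  have hx : ∀ i (hi : i < m + 1), T.orderEmbOfFin hc ⟨i, hi⟩ ∈ T := fun i hi =>
    Finset.orderEmbOfFin_mem T hc _
  set x : ℕ → ℕ := fun i => if h : i < m + 1 then T.orderEmbOfFin hc ⟨i, h⟩ else N + 1 + i with hxd
  have hx1 : ∀ i (hi : i < m + 1), x i = T.orderEmbOfFin hc ⟨i, hi⟩ := fun i hi => by
    simp only [hxd, dif_pos hi]
  have hx2 : ∀ i, ¬ i < m + 1 → x i = N + 1 + i := fun i hi => by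
    simp only [hxd, dif_neg hi]
  refine ⟨x, strictMono_nat_of_lt_succ fun i => ?_, fun i hi => ?_,
    fun j hj => absurd hj (Nat.not_lt_zero j), ?_⟩
  · by_cases h1 : i + 1 < m + 1
    · rw [hx1 i (by omega), hx1 (i + 1) h1]
      exact (T.orderEmbOfFin hc).strictMono (Fin.mk_lt_mk.mpr (Nat.lt_succ_self i))
    · rw [hx2 (i + 1) h1]
      by_cases h0 : i < m + 1
      · rw [hx1 i h0]
        have := (Finset.mem_Icc.mp (hT (hx i h0))).2
        omega
      · rw [hx2 i h0]
        omega
  · rw [hx1 i (by omega)]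
    exact hT (hx i _)
  · refine Finset.eq_of_subset_of_card_le (fun z hz => ?_) ?_
    · obtain ⟨i, hi, rfl⟩ := Finset.mem_image.mp hz
      have hi' : 0 + i < m + 1 := by
        have := Finset.mem_range.mp hi
        omega
      rw [hx1 _ hi']
      exact hx _ _
    · rw [Finset.card_image_of_injOn, Finset.card_range, hc]
      intro i hi j hj hij
      have hi' : 0 + i < m + 1 := by
        have := Finset.mem_range.mp hi
        omega
      have hj' : 0 + j < m + 1 := by
        have := Finset.mem_range.mp hj
        omega
      simp only [hx1 _ hi', hx1 _ hj'] at hij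
      have := congrArg Fin.val ((T.orderEmbOfFin hc).injective hij)
      simpa using this

/-- A blue tight path ending in `{a} ∪ T` extends along a blue edge `{a, b} ∪ T`. -/
theorem BluePathTo.extend {m N : ℕ} {χ : Finset ℕ → Bool} {ℓ a b : ℕ} {T : Finset ℕ}
    (h : BluePathTo m N χ ℓ (insert a T)) (hT : ∀ t ∈ T, a < t ∧ t < b) (hab : a < b)
    (hb : b ∈ Finset.Icc 1 N) (hblue : χ (insert b (insert a T)) = false) :
    BluePathTo m N χ (ℓ + 1) (insert b T) := by
  obtain ⟨x, hx, hxN, hxχ, hxT⟩ := h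
  have hmem : ∀ i < m + 1, x (ℓ + i) ∈ insert a T := fun i hi =>
    hxT ▸ Finset.mem_image_of_mem (fun i => x (ℓ + i)) (Finset.mem_range.mpr hi)
  have hltb : ∀ z ∈ insert a T, z < b := by
    intro z hz
    rcases Finset.mem_insert.mp hz with rfl | hz
    · exact hab
    · exact (hT z hz).2
  have haT : a ∉ T := fun hh => lt_irrefl _ (hT a hh).1
  -- The first of the last `m + 1` vertices is `a`, so the remaining `m` ones form `T`.
  have hxa : x ℓ = a := by
    have h1 : a ≤ x ℓ := by
      rcases Finset.mem_insert.mp (hmem 0 (by omega)) with hz | hz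
      · exact hz.ge
      · exact (hT _ hz).1.le
    have h2 : a ∈ (Finset.range (m + 1)).image fun i => x (ℓ + i) := by
      rw [hxT]
      exact Finset.mem_insert_self a T
    obtain ⟨i, -, hi⟩ := Finset.mem_image.mp h2
    exact le_antisymm (hi ▸ hx.monotone (Nat.le_add_right ℓ i)) h1
  have hTim : ((Finset.range m).image fun i => x (ℓ + 1 + i)) = T := by
    have e : insert a ((Finset.range m).image fun i => x (ℓ + 1 + i)) = insert a T := by
      rw [← hxT, Finset.range_add_one', Finset.image_insert, Finset.map_eq_image,
        Finset.image_image, add_zero, hxa]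
      congr 2
      funext i
      change x (ℓ + 1 + i) = x (ℓ + (i + 1))
      congr 1
      omega
    have ha' : a ∉ (Finset.range m).image fun i => x (ℓ + 1 + i) := by
      intro hh
      obtain ⟨i, -, hi⟩ := Finset.mem_image.mp hh
      have := hx (show ℓ < ℓ + 1 + i by omega)
      omega
    rw [← Finset.erase_insert ha', e, Finset.erase_insert haT]
  set y : ℕ → ℕ := fun i => if i < ℓ + (m + 1) then x i else b + (i - (ℓ + (m + 1))) with hyd
  have hy1 : ∀ i, i < ℓ + (m + 1) → y i = x i := fun i hi => if_pos hi
  have hy2 : ∀ i, ¬ i < ℓ + (m + 1) → y i = b + (i - (ℓ + (m + 1))) := fun i hi => if_neg hi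
  have hyb : y (ℓ + (m + 1)) = b := by rw [hy2 _ (lt_irrefl _), Nat.sub_self, add_zero]
  have hwin : ((Finset.range (m + 1)).image fun i => y (ℓ + i)) = insert a T := by
    rw [← hxT]
    refine Finset.image_congr fun i hi => hy1 _ ?_
    have := Finset.mem_range.mp hi
    omega
  refine ⟨y, strictMono_nat_of_lt_succ fun i => ?_, fun i hi => ?_, fun j hj => ?_, ?_⟩
  · by_cases h1 : i + 1 < ℓ + (m + 1)
    · rw [hy1 _ h1, hy1 i (by omega)]
      exact hx (Nat.lt_succ_self i)
    · by_cases h0 : i < ℓ + (m + 1)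
      · obtain rfl : i = ℓ + m := by omega
        rw [hy1 _ h0, show ℓ + m + 1 = ℓ + (m + 1) from rfl, hyb]
        exact hltb _ (hmem m (by omega))
      · rw [hy2 _ h0, hy2 _ h1]
        omega
  · by_cases h0 : i < ℓ + (m + 1)
    · rw [hy1 _ h0]
      exact hxN i h0
    · obtain rfl : i = ℓ + (m + 1) := by omega
      rw [hyb]
      exact hb
  · by_cases h0 : j < ℓ
    · rw [← hxχ j h0]
      congr 1
      refine Finset.image_congr fun i hi => hy1 _ ?_
      have := Finset.mem_range.mp hi
      omega
    · obtain rfl : j = ℓ := by omega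
      rw [Finset.range_add_one, Finset.image_insert, hwin, hyb]
      exact hblue
  · rw [Finset.range_add_one, Finset.image_insert, show ℓ + 1 + m = ℓ + (m + 1) by omega, hyb]
    congr 1
    rw [← hTim]
    refine Finset.image_congr fun i hi => hy1 _ ?_
    have := Finset.mem_range.mp hi
    omega

theorem BluePathTo.hasBlueTightPath {m N n : ℕ} {χ : Finset ℕ → Bool} {ℓ : ℕ} {T : Finset ℕ}
    (h : BluePathTo m N χ ℓ T) (hn : n ≤ ℓ + (m + 1)) : HasBlueTightPath (m + 2) n N χ := by
  obtain ⟨x, hx, hxN, hxχ, -⟩ := h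
  exact ⟨x, hx, fun i hi => hxN i (by omega), fun j hj => hxχ j (by omega)⟩

/-- Labelling an `(m + 1)`-set by the length of the longest blue tight path ending in it, an
`(m + 2)`-set is red as soon as its label does not increase when its smallest element is deleted
instead of its largest. -/
theorem Forces.ramsey {m M n N : ℕ} (h : Forces m M n) (hn : 1 ≤ n) (hMN : M ≤ N)
    (χ : Finset ℕ → Bool) :
    HasRedClique (m + 2) (m + 3) N χ ∨ HasBlueTightPath (m + 2) n N χ := by
  classical
  by_contra hcon
  rw [not_or] at hcon
  obtain ⟨hred, hblue⟩ := hcon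
  set f : Finset ℕ → ℕ := fun T => Nat.findGreatest (fun ℓ => BluePathTo m N χ ℓ T) n with hfd
  have hf : ∀ T, f T < n := by
    intro T
    refine lt_of_le_of_ne (Nat.findGreatest_le n) fun he => ?_
    have hp : BluePathTo m N χ n T := by
      have := Nat.findGreatest_of_ne_zero (P := fun ℓ => BluePathTo m N χ ℓ T) (n := n)
        (m := n) he (by omega)
      exact this
    exact hblue (hp.hasBlueTightPath (by omega))
  obtain ⟨W, hWV, hWc, hW⟩ := h f hf (Finset.Icc 1 N) (by simpa using hMN)
  refine hred ⟨W, hWV, hWc, fun e he hec => ?_⟩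
  by_contra hχ
  rw [Bool.not_eq_true] at hχ
  have hne : e.Nonempty := Finset.card_pos.mp (by omega)
  set a := e.min' hne with ha
  set b := e.max' hne with hb
  have hae : a ∈ e := e.min'_mem hne
  have hbe : b ∈ e := e.max'_mem hne
  have hab : a < b := Finset.min'_lt_max'_of_card e (by omega)
  set T := (e.erase b).erase a with hTd
  have haT : a ∉ T := Finset.notMem_erase a _
  have haeb : a ∈ e.erase b := Finset.mem_erase.mpr ⟨hab.ne, hae⟩
  have hTe : T ⊆ e := fun z hz => Finset.mem_of_mem_erase (Finset.mem_of_mem_erase hz)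
  have hTc : T.card = m := by
    rw [hTd, Finset.card_erase_of_mem haeb, Finset.card_erase_of_mem hbe, hec]
    omega
  have haTe : insert a T = e.erase b := Finset.insert_erase haeb
  have hbaT : insert b (insert a T) = e := by rw [haTe, Finset.insert_erase hbe]
  have hTab : ∀ t ∈ T, a < t ∧ t < b := fun t ht =>
    ⟨lt_of_le_of_ne (e.min'_le t (hTe ht)) (Finset.ne_of_mem_erase ht).symm,
      lt_of_le_of_ne (e.le_max' t (hTe ht))
        (Finset.ne_of_mem_erase (Finset.mem_of_mem_erase ht))⟩
  have hle := hW T a b hTc (he hae) (he hbe) (hTe.trans he) hTab hab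
  have hp0 : BluePathTo m N χ 0 (insert a T) :=
    bluePathTo_zero (by rw [haTe]; exact (Finset.erase_subset _ _).trans (he.trans hWV))
      (by rw [Finset.card_insert_of_notMem haT, hTc])
  have hp : BluePathTo m N χ (f (insert a T)) (insert a T) :=
    Nat.findGreatest_spec (P := fun ℓ => BluePathTo m N χ ℓ (insert a T)) (Nat.zero_le n) hp0
  have hq := hp.extend hTab hab (hWV (he hbe)) (by rw [hbaT]; exact hχ)
  have hge : f (insert a T) + 1 ≤ f (insert b T) :=
    Nat.le_findGreatest (P := fun ℓ => BluePathTo m N χ ℓ (insert b T))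
      (hf (insert a T)) hq
  omega

/-- For every integer `k ≥ 3` and all sufficiently large `n`,
`r_k(k+1, P_n) < twr_{k−2}(n^{62})`: every red/blue coloring of the `k`-element subsets
of `{1,...,N}` with `N ≥ twr_{k−2}(n^{62})` contains a red `K_{k+1}^k` or a blue ordered
`k`-uniform tight path on `n` vertices. -/
theorem stmt_4 :
    ∀ k : ℕ, 3 ≤ k → ∃ n₀ : ℕ, ∀ n : ℕ, n₀ ≤ n →
      cliquePathRamsey k (k + 1) n < twr (k - 2) (n ^ 62) ∧
      ∀ N : ℕ, twr (k - 2) (n ^ 62) ≤ N → ∀ χ : Finset ℕ → Bool,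
        HasRedClique k (k + 1) N χ ∨ HasBlueTightPath k n N χ := by
  intro k hk
  obtain ⟨m, rfl⟩ := Nat.exists_eq_add_of_le' hk
  obtain ⟨n₀, h⟩ := forces_twr_sub_one m
  refine ⟨n₀, fun n hn => ?_⟩
  obtain ⟨hn1, htwr, hF⟩ := h n hn
  rw [show m + 3 - 2 = m + 1 by omega]
  refine ⟨?_, fun N hN χ => hF.ramsey hn1 (by omega) χ⟩
  have hle : cliquePathRamsey (m + 3) (m + 3 + 1) n ≤ twr (m + 1) (n ^ 62) - 1 :=
    Nat.sInf_le fun χ => hF.ramsey hn1 le_rfl χ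
  omega
end

section
/- For every integer k ≥ 3 there exists a constant c > 0 such that for all sufficiently large n, r_k(k+1, P_n) > twr_{k−2}(n^c): there is a red/blue coloring of the k-element subsets of {1,...,⌊twr_{k−2}(n^c)⌋} with no red copy of the complete k-uniform hypergraph on k+1 vertices and no blue ordered copy of the k-uniform tight path on n vertices. -/
/-! ### Coloring shift graphs -/

open Classical in
/-- The color of a pair `a ≠ b`: the lowest bit position `i` at which they differ together with
the `i`-th bit of `b`, encoded as `2 * i + bit`. The junk value for `a = b` is `0`. -/
noncomputable def shiftColor (a b : ℕ) : ℕ :=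
  if h : ∃ i, a.testBit i ≠ b.testBit i then
    2 * Nat.find h + (b.testBit (Nat.find h)).toNat
  else 0

lemma shiftColor_spec {a b : ℕ} (hab : a ≠ b) :
    ∃ i, a.testBit i ≠ b.testBit i ∧ shiftColor a b = 2 * i + (b.testBit i).toNat := by
  classical
  have h : ∃ i, a.testBit i ≠ b.testBit i := by
    by_contra! h
    exact hab (Nat.eq_of_testBit_eq h)
  refine ⟨Nat.find h, Nat.find_spec h, ?_⟩
  rw [shiftColor, dif_pos h]

lemma shiftColor_ne {a b c : ℕ} (hab : a ≠ b) (hbc : b ≠ c) :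
    shiftColor a b ≠ shiftColor b c := by
  obtain ⟨i, hi, ei⟩ := shiftColor_spec hab
  obtain ⟨j, hj, ej⟩ := shiftColor_spec hbc
  rw [ei, ej]
  intro h
  have h1 := Bool.toNat_lt (b.testBit i)
  have h2 := Bool.toNat_lt (c.testBit j)
  obtain rfl : i = j := by omega
  apply hj
  have : (b.testBit i).toNat = (c.testBit i).toNat := by omega
  revert this
  cases b.testBit i <;> cases c.testBit i <;> simp

lemma shiftColor_lt {a b h : ℕ} (hab : a ≠ b) (ha : a < 2 ^ h) (hb : b < 2 ^ h) :
    shiftColor a b < 2 * h := by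
  obtain ⟨i, hi, ei⟩ := shiftColor_spec hab
  have hlt : i < h := by
    by_contra! hle
    have hp : 2 ^ h ≤ 2 ^ i := Nat.pow_le_pow_right (by norm_num) hle
    exact hi (by
      rw [Nat.testBit_lt_two_pow (ha.trans_le hp), Nat.testBit_lt_two_pow (hb.trans_le hp)])
  have h1 := Bool.toNat_lt (b.testBit i)
  omega

/-- The `j`-fold iterate of `x ↦ (i ↦ shiftColor (x i) (x (i + 1)))`. -/
noncomputable def shiftIter : ℕ → (ℕ → ℕ) → ℕ → ℕ
  | 0, x => x
  | j + 1, x => fun i => shiftColor (shiftIter j x i) (shiftIter j x (i + 1))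

/-- `shiftIter j` only looks at windows of length `j + 1`. -/
lemma shiftIter_congr (j : ℕ) : ∀ (a b : ℕ) (x y : ℕ → ℕ),
    (∀ i ≤ j, x (a + i) = y (b + i)) → shiftIter j x a = shiftIter j y b := by
  induction j with
  | zero => intro a b x y h; simpa [shiftIter] using h 0 le_rfl
  | succ j ih =>
    intro a b x y h
    simp only [shiftIter]
    rw [ih a b x y (fun i hi => h i (by omega)), ih (a + 1) (b + 1) x y (fun i hi => ?_)]
    have := h (i + 1) (by omega)
    rwa [← add_assoc, ← add_assoc, add_right_comm a, add_right_comm b] at this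

lemma shiftIter_ne (j : ℕ) {x : ℕ → ℕ} (hx : ∀ i, x i ≠ x (i + 1)) (i : ℕ) :
    shiftIter j x i ≠ shiftIter j x (i + 1) := by
  induction j generalizing i with
  | zero => exact hx i
  | succ j ih => exact shiftColor_ne (ih i) (ih (i + 1))

lemma shiftIter_lt (j : ℕ) {x : ℕ → ℕ} (hx : ∀ i, x i ≠ x (i + 1)) {n : ℕ} : ∀ {w : ℕ},
    (∀ i < n, x i < (fun h => 2 ^ (h / 2))^[j] w) → ∀ i, i + j < n → shiftIter j x i < w := by
  induction j with
  | zero => intro w h i hi; exact h i hi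
  | succ j ih =>
    intro w h i hi
    rw [Function.iterate_succ] at h
    have h1 := ih h i (by omega)
    have h2 := ih h (i + 1) (by omega)
    have := shiftColor_lt (shiftIter_ne j hx i) h1 h2
    simp only [shiftIter]
    omega

/-! ### The coloring of `k`-sets -/

/-- The increasing enumeration of a finite set, continued by zeros. -/
noncomputable def enum (e : Finset ℕ) (i : ℕ) : ℕ :=
  if h : i < e.card then e.orderEmbOfFin rfl ⟨i, h⟩ else 0

lemma card_image_window {k : ℕ} {x : ℕ → ℕ} (hx : ∀ i j, i < j → j < k → x i < x j) :
    ((Finset.range k).image x).card = k := by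
  rw [Finset.card_image_of_injOn, Finset.card_range]
  intro i hi j hj hij
  simp only [Finset.coe_range, Set.mem_Iio] at hi hj
  rcases lt_trichotomy i j with h | h | h
  · exact absurd hij (hx i j h hj).ne
  · exact h
  · exact absurd hij (hx j i h hi).ne'

lemma enum_image {k : ℕ} {x : ℕ → ℕ} (hx : ∀ i j, i < j → j < k → x i < x j) {i : ℕ}
    (hi : i < k) : enum ((Finset.range k).image x) i = x i := by
  have hc := card_image_window hx
  have hu := Finset.orderEmbOfFin_unique (s := (Finset.range k).image x) rfl
    (f := fun t : Fin _ => x t)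
    (fun t => Finset.mem_image_of_mem _ (Finset.mem_range.2 (t.2.trans_eq hc)))
    (fun s t hst => hx s t hst (t.2.trans_eq hc))
  rw [enum, dif_pos (by rwa [hc]), ← hu]

lemma enum_lt {S : Finset ℕ} {i j : ℕ} (hij : i < j) (hj : j < S.card) :
    enum S i < enum S j := by
  rw [enum, enum, dif_pos hj, dif_pos (hij.trans hj)]
  exact (S.orderEmbOfFin rfl).strictMono hij

lemma enum_mem {S : Finset ℕ} {i : ℕ} (hi : i < S.card) : enum S i ∈ S := by
  rw [enum, dif_pos hi]
  exact Finset.orderEmbOfFin_mem _ _ _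

open Classical in
/-- A `k`-set is red when the middle one of its three iterated shift colors is a strict local
minimum. -/
noncomputable def localMinColoring (k : ℕ) (e : Finset ℕ) : Bool :=
  decide (shiftIter (k - 3) (enum e) 1 < shiftIter (k - 3) (enum e) 0 ∧
    shiftIter (k - 3) (enum e) 1 < shiftIter (k - 3) (enum e) 2)

lemma localMinColoring_window {k n : ℕ} (hk : 3 ≤ k) {x : ℕ → ℕ}
    (hx : ∀ i j, i < j → j < n → x i < x j) {j : ℕ} (hj : j + k ≤ n) :
    localMinColoring k ((Finset.range k).image fun i => x (j + i)) = true ↔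
      shiftIter (k - 3) x (j + 1) < shiftIter (k - 3) x j ∧
      shiftIter (k - 3) x (j + 1) < shiftIter (k - 3) x (j + 2) := by
  have key : ∀ a ≤ 2, shiftIter (k - 3) (enum ((Finset.range k).image fun i => x (j + i))) a =
      shiftIter (k - 3) x (j + a) := by
    intro a ha
    apply shiftIter_congr
    intro i hi
    rw [enum_image (fun s t hst ht => hx _ _ (by omega) (by omega)) (by omega), add_assoc]
  rw [localMinColoring, decide_eq_true_iff, key 0 (by omega), key 1 (by omega), key 2 (by omega),
    add_zero]

lemma no_red_clique {k N : ℕ} (hk : 3 ≤ k) :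
    ¬ HasRedClique k (k + 1) N (localMinColoring k) := by
  rintro ⟨S, -, hcard, hred⟩
  have hx : ∀ i j, i < j → j < k + 1 → enum S i < enum S j :=
    fun i j hij hj => enum_lt hij (by omega)
  have hwin : ∀ j ≤ 1,
      localMinColoring k ((Finset.range k).image fun i => enum S (j + i)) = true := by
    intro j hj
    apply hred
    · intro v hv
      obtain ⟨i, hi, rfl⟩ := Finset.mem_image.1 hv
      rw [Finset.mem_range] at hi
      exact enum_mem (by omega)
    · exact card_image_window fun s t hst ht => hx _ _ (by omega) (by omega)
  have h0 := (localMinColoring_window hk hx (j := 0) (by omega)).1 (hwin 0 (by omega))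
  have h1 := (localMinColoring_window hk hx (j := 1) (by omega)).1 (hwin 1 (by omega))
  simp only [Nat.reduceAdd] at h0 h1
  omega

/-- A sequence with values below `w`, distinct consecutive terms and no strict local minimum rises
and then falls, so it has fewer than `2 * w` terms. -/
lemma false_of_no_local_min {w L : ℕ} (hw : 0 < w) (hL : 2 * w ≤ L) {y : ℕ → ℕ}
    (hne : ∀ i, y i ≠ y (i + 1)) (hlt : ∀ i < L, y i < w)
    (hmin : ∀ j, j + 3 ≤ L → ¬ (y (j + 1) < y j ∧ y (j + 1) < y (j + 2))) : False := by
  by_cases hup : ∀ i < w, y i < y (i + 1)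
  · have : ∀ i ≤ w, i ≤ y i := by
      intro i
      induction i with
      | zero => intro _; omega
      | succ i ih =>
        intro hi
        have := ih (by omega)
        have := hup i (by omega)
        omega
    have := this w le_rfl
    have := hlt w (by omega)
    omega
  · push Not at hup
    obtain ⟨i, hi, hdown⟩ := hup
    have hd0 : y (i + 1) < y i := lt_of_le_of_ne hdown (hne i).symm
    have hd : ∀ t, i + t + 1 < L → y (i + t + 1) < y (i + t) := by
      intro t
      induction t with
      | zero => intro _; exact hd0
      | succ t ih =>
        intro ht
        have h1 := ih (by omega)
        have h2 := hmin (i + t) (by omega)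
        have h3 := hne (i + t + 1)
        have e : i + (t + 1) = i + t + 1 := rfl
        rw [e]
        have e2 : i + t + 2 = i + t + 1 + 1 := rfl
        rw [e2] at h2
        omega
    have hsum : ∀ t, i + t < L → y (i + t) + t ≤ y i := by
      intro t
      induction t with
      | zero => intro _; simp
      | succ t ih =>
        intro ht
        have h1 := ih (by omega)
        have h2 := hd t (by omega)
        have e : i + (t + 1) = i + t + 1 := rfl
        rw [e]
        omega
    have := hsum w (by omega)
    have := hlt i (by omega)
    omega

lemma no_blue_path {k n N w : ℕ} (hk : 3 ≤ k) (hw : 0 < w) (hn : 2 * w + k ≤ n + 3)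
    (hN : N < (fun h => 2 ^ (h / 2))^[k - 3] w) :
    ¬ HasBlueTightPath k n N (localMinColoring k) := by
  rintro ⟨x, hx, hmem, hblue⟩
  have hne : ∀ i, x i ≠ x (i + 1) := fun i => (hx (Nat.lt_succ_self i)).ne
  refine false_of_no_local_min hw (L := n - (k - 3)) (by omega) (shiftIter_ne (k - 3) hne)
    (fun i hi => shiftIter_lt (k - 3) hne (n := n)
      (fun i hi => (Finset.mem_Icc.1 (hmem i hi)).2.trans_lt hN) i (by omega)) ?_
  intro j hj hmin
  have := (localMinColoring_window hk (n := n) (fun s t hst _ => hx hst) (j := j) (by omega)).2 hmin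
  rw [hblue j (by omega)] at this
  exact absurd this (by decide)

/-! ### Tower estimate -/

/-- The slack `2 * y + 6 ≤ w` reproduces itself when `y` is replaced by `2 ^ y` and `w` by
`2 ^ (w / 2)`. -/
lemma tower_bound (j : ℕ) : ∀ (y : ℝ) (w : ℕ), 2 ≤ y → 2 * y + 6 ≤ w →
    2 * (fun y => (2 : ℝ) ^ y)^[j] y + 6 ≤ (((fun h => 2 ^ (h / 2))^[j] w : ℕ) : ℝ) ∧
      2 ≤ (fun y => (2 : ℝ) ^ y)^[j] y := by
  induction j with
  | zero => intro y w hy hw; exact ⟨hw, hy⟩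
  | succ j ih =>
    intro y w hy hw
    rw [Function.iterate_succ_apply, Function.iterate_succ_apply]
    have h4 : (4 : ℝ) ≤ 2 ^ y := by
      calc (4 : ℝ) = 2 ^ (2 : ℝ) := by norm_num
        _ ≤ 2 ^ y := Real.rpow_le_rpow_of_exponent_le (by norm_num) hy
    apply ih
    · linarith
    · have hdiv : y + 2 ≤ ((w / 2 : ℕ) : ℝ) := by
        have h1 : w ≤ 2 * (w / 2) + 1 := by omega
        have h2 : (w : ℝ) ≤ 2 * ((w / 2 : ℕ) : ℝ) + 1 := by exact_mod_cast h1
        linarith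
      have h5 : (2 : ℝ) ^ (y + 2) ≤ 2 ^ (w / 2) := by
        rw [← Real.rpow_natCast]
        exact Real.rpow_le_rpow_of_exponent_le (by norm_num) hdiv
      rw [Real.rpow_add (by norm_num)] at h5
      norm_num at h5
      push_cast
      linarith

/-! ### Finiteness of the Ramsey number -/

/-- Inductive step of the finite Ramsey theorem: from the theorem for `k`-sets, find a large set on
which the color of a `(k + 1)`-set depends only on its minimum. -/
lemma exists_min_determined {k : ℕ}
    (hk : ∀ s, ∃ N, ∀ X : Finset ℕ, N ≤ X.card → ∀ χ : Finset ℕ → Bool,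
      ∃ S ⊆ X, S.card = s ∧ ∃ c, ∀ e ⊆ S, e.card = k → χ e = c) (t : ℕ) :
    ∃ N, ∀ X : Finset ℕ, N ≤ X.card → ∀ χ : Finset ℕ → Bool,
      ∃ S ⊆ X, S.card = t ∧ ∃ g : ℕ → Bool, ∀ e ⊆ S, e.card = k + 1 →
        ∀ a ∈ e, (∀ b ∈ e, a ≤ b) → χ e = g a := by
  induction t with
  | zero =>
    refine ⟨0, fun X _ χ => ⟨∅, by simp, by simp, fun _ => true, ?_⟩⟩
    intro e he hc
    rw [Finset.subset_empty.1 he] at hc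
    simp at hc
  | succ t ih =>
    obtain ⟨N', hN'⟩ := ih
    obtain ⟨M, hM⟩ := hk N'
    refine ⟨M + 1, fun X hX χ => ?_⟩
    have hne : X.Nonempty := Finset.card_pos.1 (by omega)
    have haX := X.min'_mem hne
    set a := X.min' hne with ha
    obtain ⟨Y, hYX, hYc, c, hY⟩ := hM (X.erase a) (by rw [Finset.card_erase_of_mem haX]; omega)
      (fun e => χ (insert a e))
    obtain ⟨S, hSY, hSc, g, hS⟩ := hN' Y hYc.ge χ
    have haS : a ∉ S := fun h => by simpa using hYX (hSY h)
    refine ⟨insert a S, ?_, by rw [Finset.card_insert_of_notMem haS, hSc],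
      Function.update g a c, ?_⟩
    · exact Finset.insert_subset haX
        ((hSY.trans hYX).trans (Finset.erase_subset _ _))
    intro e he hc b hb hmin
    by_cases hae : a ∈ e
    · have hba : b = a := by
        apply le_antisymm (hmin a hae)
        apply X.min'_le
        rcases Finset.mem_insert.1 (he hb) with h | h
        · rwa [h]
        · exact Finset.mem_of_mem_erase (hYX (hSY h))
      rw [hba, Function.update_self, ← hY (e.erase a), Finset.insert_erase hae]
      · exact (Finset.subset_insert_iff.1 he).trans hSY
      · rw [Finset.card_erase_of_mem hae, hc]; rfl
    · have hba : b ≠ a := fun h => hae (h ▸ hb)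
      rw [Function.update_of_ne hba]
      exact hS e ((Finset.subset_insert_iff_of_notMem hae).1 he) hc b hb hmin

/-- The finite Ramsey theorem for two-colorings of `k`-sets. -/
lemma exists_mono (k : ℕ) : ∀ s, ∃ N, ∀ X : Finset ℕ, N ≤ X.card → ∀ χ : Finset ℕ → Bool,
    ∃ S ⊆ X, S.card = s ∧ ∃ c, ∀ e ⊆ S, e.card = k → χ e = c := by
  induction k with
  | zero =>
    refine fun s => ⟨s, fun X hX χ => ?_⟩
    obtain ⟨S, hS, hc⟩ := Finset.exists_subset_card_eq hX
    refine ⟨S, hS, hc, χ ∅, fun e _ he => ?_⟩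
    rw [Finset.card_eq_zero.1 he]
  | succ k ih =>
    intro s
    obtain ⟨N, hN⟩ := exists_min_determined ih (2 * s)
    refine ⟨N, fun X hX χ => ?_⟩
    obtain ⟨S, hSX, hSc, g, hS⟩ := hN X hX χ
    have hpig : ∃ c, s ≤ (S.filter fun a => g a = c).card := by
      by_contra! h
      have h1 := h true
      have h2 := h false
      have h3 := Finset.card_filter_add_card_filter_not (s := S) (fun a => g a = true)
      simp only [Bool.not_eq_true] at h3
      omega
    obtain ⟨c, hc⟩ := hpig
    obtain ⟨T, hT, hTc⟩ := Finset.exists_subset_card_eq hc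
    refine ⟨T, (hT.trans (Finset.filter_subset _ _)).trans hSX, hTc, c, fun e he hec => ?_⟩
    have hne : e.Nonempty := Finset.card_pos.1 (by omega)
    rw [hS e ((he.trans hT).trans (Finset.filter_subset _ _)) hec (e.min' hne) (e.min'_mem hne)
      (fun b hb => e.min'_le b hb)]
    exact (Finset.mem_filter.1 (hT (he (e.min'_mem hne)))).2

lemma ramsey_set_nonempty (k s n : ℕ) :
    {N | ∀ χ : Finset ℕ → Bool, HasRedClique k s N χ ∨ HasBlueTightPath k n N χ}.Nonempty := by
  obtain ⟨N, hN⟩ := exists_mono k (s + n)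
  refine ⟨N, fun χ => ?_⟩
  obtain ⟨S, hSX, hSc, c, hS⟩ := hN (Finset.Icc 1 N) (by simp) χ
  cases c with
  | true =>
    left
    obtain ⟨T, hT, hTc⟩ := Finset.exists_subset_card_eq (show s ≤ S.card by omega)
    exact ⟨T, hT.trans hSX, hTc, fun e he hc => hS e (he.trans hT) hc⟩
  | false =>
    right
    -- The path enumerates `S` and is continued beyond `N`, where only monotonicity matters.
    let x : ℕ → ℕ := fun i => if i < S.card then enum S i else N + 1 + i
    have hxS : ∀ i < n, x i ∈ S := by
      intro i hi
      simp only [x]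
      rw [if_pos (by omega)]
      exact enum_mem (by omega)
    have hx : StrictMono x := by
      intro i j hij
      simp only [x]
      split_ifs with h1 h2 h2
      · exact enum_lt hij h2
      · have := (Finset.mem_Icc.1 (hSX (enum_mem h1))).2
        omega
      · omega
      · omega
    refine ⟨x, hx, fun i hi => hSX (hxS i hi), fun j hj => hS _ ?_ ?_⟩
    · intro v hv
      obtain ⟨i, hi, rfl⟩ := Finset.mem_image.1 hv
      rw [Finset.mem_range] at hi
      exact hxS _ (by omega)
    · exact card_image_window fun s t hst _ => hx (by omega)

lemma lt_cliquePathRamsey {k s n N : ℕ} {χ : Finset ℕ → Bool} (hr : ¬ HasRedClique k s N χ)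
    (hb : ¬ HasBlueTightPath k n N χ) : N < cliquePathRamsey k s n := by
  by_contra! hle
  have hsub : Finset.Icc 1 (cliquePathRamsey k s n) ⊆ Finset.Icc 1 N :=
    Finset.Icc_subset_Icc_right hle
  rcases Nat.sInf_mem (ramsey_set_nonempty k s n) χ with ⟨S, hS, h⟩ | ⟨x, hx, hm, h⟩
  · exact hr ⟨S, hS.trans hsub, h⟩
  · exact hb ⟨x, hx, fun i hi => hsub (hm i hi), h⟩

/-- For every integer `k ≥ 3` there exists `c > 0` such that for all
sufficiently large `n`, `r_k(k+1, P_n) > twr_{k−2}(n^c)`: there is a red/blue coloring of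
the `k`-element subsets of `{1,...,⌊twr_{k−2}(n^c)⌋}` with no red `K_{k+1}^k` and no blue
ordered `k`-uniform tight path on `n` vertices. -/
theorem stmt_5 :
    ∀ k : ℕ, 3 ≤ k → ∃ c : ℝ, 0 < c ∧ ∃ n₀ : ℕ, ∀ n : ℕ, n₀ ≤ n →
      rtwr (k - 2) ((n : ℝ) ^ c) < (cliquePathRamsey k (k + 1) n : ℝ) ∧
      ∃ χ : Finset ℕ → Bool,
        ¬ HasRedClique k (k + 1) ⌊rtwr (k - 2) ((n : ℝ) ^ c)⌋₊ χ ∧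
        ¬ HasBlueTightPath k n ⌊rtwr (k - 2) ((n : ℝ) ^ c)⌋₊ χ := by
  intro k hk
  refine ⟨1 / 2, by norm_num, 2 * k + 200, fun n hn => ?_⟩
  rw [← Real.sqrt_eq_rpow]
  have hn' : 2 * (k : ℝ) + 200 ≤ n := by exact_mod_cast hn
  have hk' : (0 : ℝ) ≤ k := Nat.cast_nonneg k
  have hsq : √(n : ℝ) * √(n : ℝ) = n := Real.mul_self_sqrt (by linarith)
  have h14 : (14 : ℝ) ≤ √(n : ℝ) := Real.le_sqrt_of_sq_le (by linarith)
  set w := (n - k) / 2 with hw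
  have hwn : (n : ℝ) ≤ 2 * w + 1 + k := by
    have : n ≤ 2 * w + 1 + k := by omega
    exact_mod_cast this
  have hT := (tower_bound (k - 3) (√(n : ℝ)) w (by linarith) (by nlinarith)).1
  have hrt : rtwr (k - 2) (√(n : ℝ)) = (fun y => (2 : ℝ) ^ y)^[k - 3] (√(n : ℝ)) := rfl
  have hpos := (tower_bound (k - 3) (√(n : ℝ)) w (by linarith) (by nlinarith)).2
  rw [← hrt] at hT hpos
  have hlt : ⌊rtwr (k - 2) (√(n : ℝ))⌋₊ < (fun h => 2 ^ (h / 2))^[k - 3] w := by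
    rw [Nat.floor_lt (by linarith)]
    linarith
  have hr := no_red_clique (N := ⌊rtwr (k - 2) (√(n : ℝ))⌋₊) hk
  have hb := no_blue_path (n := n) hk (show 0 < w by omega) (by omega) hlt
  exact ⟨(Nat.floor_lt (by linarith)).1 (lt_cliquePathRamsey hr hb), _, hr, hb⟩
end

section
/- For all integers n > k ≥ 3, f_k(n) ≤ 2n^2: every red/blue coloring of the k-element subsets of {1,...,2n^2} contains a blue ordered copy of the k-uniform tight path P_n, or a set S of k+1 vertices spanning at least 3 red k-element subsets, one of which consists of the k smallest vertices of S. -/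
/-! ### The tree of canonical blue paths -/

/-- The path `Q` (listed decreasingly) may be extended by the new last vertex `d`: either the
extended path still has fewer than `k` vertices or its new last `k`-window is blue. -/
def PathOk (k : ℕ) (χ : Finset ℕ → Bool) (Q : List ℕ) (d : ℕ) : Prop :=
  Q.length < k - 1 ∨ χ (insert d (Q.take (k - 1)).toFinset) = false

/-- Canonical paths obtained from a rule `g` that selects, for each vertex `d`, the path to which
`d` is appended, given the canonical paths of the smaller vertices. -/
noncomputable def greedyPath (g : ℕ → (ℕ → List ℕ) → List ℕ) (d : ℕ) : List ℕ :=
  d :: g d (fun b => if _h : b < d then greedyPath g b else [])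
termination_by d

/-- `P` assigns to each vertex `d` a path ending at `d` that appends `d` to a longest admissible
path among the `P b` with `1 ≤ b < d` (or to the empty path). -/
def IsPathTree (k : ℕ) (χ : Finset ℕ → Bool) (P : ℕ → List ℕ) : Prop :=
  ∀ d, ∃ Q, P d = d :: Q ∧ (Q = [] ∨ ∃ b, 1 ≤ b ∧ b < d ∧ Q = P b ∧ PathOk k χ Q d) ∧
    ∀ b, 1 ≤ b → b < d → PathOk k χ (P b) d → (P b).length ≤ Q.length

lemma exists_pathTree (k : ℕ) (χ : Finset ℕ → Bool) : ∃ P, IsPathTree k χ P := by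
  classical
  have key : ∀ (d : ℕ) (F : ℕ → List ℕ), ∃ Q : List ℕ,
      (Q = [] ∨ ∃ b, 1 ≤ b ∧ b < d ∧ Q = F b ∧ PathOk k χ Q d) ∧
      ∀ b, 1 ≤ b → b < d → PathOk k χ (F b) d → (F b).length ≤ Q.length := by
    intro d F
    obtain ⟨Q, hQ, hmax⟩ := Finset.exists_max_image
      (insert [] (((Finset.Ico 1 d).image F).filter fun Q => PathOk k χ Q d)) List.length
      ⟨[], Finset.mem_insert_self _ _⟩
    refine ⟨Q, ?_, ?_⟩
    · rw [Finset.mem_insert, Finset.mem_filter, Finset.mem_image] at hQ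
      rcases hQ with h | ⟨⟨b, hb, rfl⟩, hok⟩
      · exact Or.inl h
      · rw [Finset.mem_Ico] at hb
        exact Or.inr ⟨b, hb.1, hb.2, rfl, hok⟩
    · intro b h1 h2 hok
      apply hmax
      rw [Finset.mem_insert, Finset.mem_filter, Finset.mem_image]
      exact Or.inr ⟨⟨b, Finset.mem_Ico.2 ⟨h1, h2⟩, rfl⟩, hok⟩
  choose g hg using key
  refine ⟨greedyPath g, fun d => ?_⟩
  obtain ⟨h1, h2⟩ := hg d (fun b => if _h : b < d then greedyPath g b else [])
  refine ⟨_, greedyPath.eq_1 g d, ?_, ?_⟩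
  · rcases h1 with h | ⟨b, hb1, hbd, hQ, hok⟩
    · exact Or.inl h
    · refine Or.inr ⟨b, hb1, hbd, ?_, hok⟩
      rw [hQ]
      simp [hbd]
  · intro b hb1 hbd hok
    have := h2 b hb1 hbd
    simp only [hbd, dite_true] at this
    exact this hok

/-- The canonical path of `d` is listed strictly decreasingly, consists of positive vertices, and
has only blue windows. -/
lemma IsPathTree.good {k : ℕ} {χ : Finset ℕ → Bool} {P : ℕ → List ℕ} (hk : 3 ≤ k)
    (hP : IsPathTree k χ P) (d : ℕ) (hd : 1 ≤ d) :
    (P d).Pairwise (· > ·) ∧ (∀ a ∈ P d, 1 ≤ a ∧ a ≤ d) ∧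
      ∀ t, t + k ≤ (P d).length → χ (((P d).drop t).take k).toFinset = false := by
  induction d using Nat.strong_induction_on with
  | _ d ih =>
    obtain ⟨Q, hPd, hQ, -⟩ := hP d
    rw [hPd]
    rcases hQ with rfl | ⟨b, hb1, hbd, hQb, hok⟩
    · refine ⟨by simp, by simpa using hd, ?_⟩
      intro t ht
      simp at ht
      omega
    · obtain ⟨i1, i2, i3⟩ := ih b hbd hb1
      rw [← hQb] at i1 i2 i3
      refine ⟨?_, ?_, ?_⟩
      · rw [List.pairwise_cons]
        exact ⟨fun a ha => lt_of_le_of_lt (i2 a ha).2 hbd, i1⟩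
      · intro a ha
        rcases List.mem_cons.1 ha with rfl | ha
        · exact ⟨hd, le_rfl⟩
        · exact ⟨(i2 a ha).1, (i2 a ha).2.trans hbd.le⟩
      · intro t ht
        rw [List.length_cons] at ht
        cases t with
        | zero =>
          rcases hok with h | h
          · omega
          · obtain ⟨m, rfl⟩ : ∃ m, k = m + 1 := ⟨k - 1, by omega⟩
            simpa using h
        | succ t => simpa using i3 t (by omega)

/-- Reading a long canonical path backwards gives an ordered blue tight path.  Beyond the length of
the list the sequence is continued by arbitrary large values. -/
lemma IsPathTree.hasBlueTightPath {k n N : ℕ} {χ : Finset ℕ → Bool} {P : ℕ → List ℕ} (hk : 3 ≤ k)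
    (hP : IsPathTree k χ P) (d : ℕ) (hd : 1 ≤ d) (hdN : d ≤ N) (hn : n ≤ (P d).length) :
    HasBlueTightPath k n N χ := by
  obtain ⟨h1, h2, h3⟩ := hP.good hk d hd
  generalize P d = L at *
  have hmem : ∀ i (hi : i < L.length), 1 ≤ L[i] ∧ L[i] ≤ d := fun i hi =>
    h2 _ (List.getElem_mem hi)
  have hdec : ∀ i j (hi : i < L.length) (hj : j < L.length), i < j → L[j] < L[i] :=
    fun i j hi hj hij => List.pairwise_iff_getElem.1 h1 i j hi hj hij
  refine ⟨fun i => if h : i < L.length then L[L.length - 1 - i] else d + 1 + i, ?_, ?_, ?_⟩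
  · intro i j hij
    dsimp only
    by_cases hj : j < L.length
    · have hi : i < L.length := hij.trans hj
      rw [dif_pos hi, dif_pos hj]
      exact hdec _ _ _ _ (by omega)
    · rw [dif_neg hj]
      by_cases hi : i < L.length
      · rw [dif_pos hi]
        have := (hmem (L.length - 1 - i) (by omega)).2
        omega
      · rw [dif_neg hi]
        omega
  · intro i hi
    dsimp only
    rw [dif_pos (hi.trans_le hn), Finset.mem_Icc]
    have := hmem (L.length - 1 - i) (by omega)
    omega
  · intro j hj
    rw [← h3 (L.length - j - k) (by omega)]
    congr 1
    ext a
    simp only [Finset.mem_image, Finset.mem_range, List.mem_toFinset, List.mem_take_iff_getElem,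
      List.length_drop, List.getElem_drop]
    constructor
    · rintro ⟨i, hi, rfl⟩
      refine ⟨k - 1 - i, by omega, ?_⟩
      rw [dif_pos (by omega)]
      congr 1
      omega
    · rintro ⟨i, hi, rfl⟩
      refine ⟨k - 1 - i, by omega, ?_⟩
      rw [dif_pos (by omega)]
      congr 1
      omega

/-! ### Vertices of equal depth -/

/-- If `b < c` have equal depth, then `c` is not admissible for the path of `b`: otherwise the
depth of `c` would exceed that of `b`. -/
lemma IsPathTree.not_ok {k : ℕ} {χ : Finset ℕ → Bool} {P : ℕ → List ℕ}
    (hP : IsPathTree k χ P) {b c : ℕ} (hb : 1 ≤ b) (hbc : b < c)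
    (hlen : (P b).length = (P c).length) : ¬ PathOk k χ (P b) c := by
  intro h
  obtain ⟨Q, hPc, -, hmax⟩ := hP c
  have := hmax b hb hbc h
  rw [hlen, hPc, List.length_cons] at this
  omega

/-- Three vertices of equal depth, the smallest two being appended to the same path, produce a red
initial spread. -/
lemma red_spread_of_triple {k N : ℕ} {χ : Finset ℕ → Bool} {P : ℕ → List ℕ} (hk : 3 ≤ k)
    (hP : IsPathTree k χ P) {b b' c : ℕ} (hb : 1 ≤ b) (hbb : b < b') (hbc : b' < c) (hc : c ≤ N)
    (h1 : (P b).length = (P b').length) (h2 : (P b').length = (P c).length)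
    (ht : (P b).tail = (P b').tail) : HasRedInitialSpread k 3 N χ := by
  have r1 := hP.not_ok hb hbb h1
  have r2 := hP.not_ok hb (hbb.trans hbc) (h1.trans h2)
  have r3 := hP.not_ok (hb.trans hbb.le) hbc h2
  obtain ⟨g1, g2, -⟩ := hP.good hk b hb
  obtain ⟨Q, hPb, -⟩ := hP b
  obtain ⟨Q', hPb', -⟩ := hP b'
  rw [hPb, hPb'] at ht
  simp only [List.tail_cons] at ht
  subst ht
  rw [hPb] at r1 r2 g1 g2
  rw [hPb'] at r3
  obtain ⟨m, rfl⟩ : ∃ m, k = m + 2 := ⟨k - 2, by omega⟩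
  simp only [PathOk, not_or, Bool.not_eq_false, List.length_cons, Nat.add_succ_sub_one,
    List.take_succ_cons, List.toFinset_cons, not_lt] at r1 r2 r3
  rw [List.pairwise_cons] at g1
  have hAc : (Q.take m).toFinset.card = m := by
    rw [List.toFinset_card_of_nodup, List.length_take]
    · omega
    · exact ((g1.2.imp fun h => h.ne').sublist (List.take_sublist _ _))
  have hA : ∀ a ∈ (Q.take m).toFinset, 1 ≤ a ∧ a < b := by
    intro a ha
    have ha' := List.mem_of_mem_take (List.mem_toFinset.1 ha)
    exact ⟨(g2 a (List.mem_cons_of_mem _ ha')).1, g1.1 a ha'⟩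
  generalize (Q.take m).toFinset = A at *
  have nb : b ∉ A := fun h => by have := hA b h; omega
  have nb' : b' ∉ A := fun h => by have := hA b' h; omega
  have nc : c ∉ A := fun h => by have := hA c h; omega
  have n1 : b' ∉ insert b A := by simp [nb', hbb.ne']
  have n2 : c ∉ insert b A := by simp [nc, (hbb.trans hbc).ne']
  have n3 : c ∉ insert b' A := by simp [nc, hbc.ne']
  have n4 : c ∉ insert b' (insert b A) := by simp [nc, hbc.ne', (hbb.trans hbc).ne']
  have n5 : b ∉ insert c (insert b' A) := by simp [nb, hbb.ne, (hbb.trans hbc).ne]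
  have n6 : b' ∉ insert c (insert b A) := by simp [nb', hbb.ne', hbc.ne]
  refine ⟨insert c (insert b' (insert b A)), ?_, ?_, ⟨c, Finset.mem_insert_self _ _, ?_, ?_⟩, ?_⟩
  · intro a ha
    simp only [Finset.mem_insert] at ha
    rw [Finset.mem_Icc]
    rcases ha with rfl | rfl | rfl | ha
    · omega
    · omega
    · omega
    · have := hA a ha
      omega
  · rw [Finset.card_insert_of_notMem n4, Finset.card_insert_of_notMem n1,
      Finset.card_insert_of_notMem nb, hAc]
  · intro a ha
    simp only [Finset.mem_insert] at ha
    rcases ha with rfl | rfl | rfl | ha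
    · omega
    · omega
    · omega
    · have := hA a ha
      omega
  · rw [Finset.erase_insert n4]
    exact r1.2
  · have hthree : ({insert b' (insert b A), insert c (insert b A), insert c (insert b' A)} :
        Finset (Finset ℕ)).card = 3 := by
      rw [Finset.card_eq_three]
      refine ⟨_, _, _, ?_, ?_, ?_, rfl⟩
      · intro h
        exact n4 (h ▸ Finset.mem_insert_self _ _)
      · intro h
        exact n4 (h ▸ Finset.mem_insert_self _ _)
      · intro h
        apply n6
        rw [h]
        simp
    rw [← hthree]
    apply Finset.card_le_card
    intro e he
    simp only [Finset.mem_insert, Finset.mem_singleton] at he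
    rw [Finset.mem_filter, Finset.mem_powersetCard]
    rcases he with rfl | rfl | rfl
    · refine ⟨⟨Finset.subset_insert _ _, ?_⟩, r1.2⟩
      rw [Finset.card_insert_of_notMem n1, Finset.card_insert_of_notMem nb, hAc]
    · refine ⟨⟨Finset.insert_subset_insert _ (Finset.subset_insert _ _), ?_⟩, r2.2⟩
      rw [Finset.card_insert_of_notMem n2, Finset.card_insert_of_notMem nb, hAc]
    · refine ⟨⟨Finset.insert_subset_insert _
        (Finset.insert_subset_insert _ (Finset.subset_insert _ _)), ?_⟩, r3.2⟩
      rw [Finset.card_insert_of_notMem n3, Finset.card_insert_of_notMem nb', hAc]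

/-- Without a red initial spread there are at most `ℓ` vertices of depth `ℓ`. -/
lemma IsPathTree.card_level_le {k N : ℕ} {χ : Finset ℕ → Bool} {P : ℕ → List ℕ} (hk : 3 ≤ k)
    (hP : IsPathTree k χ P) (hno : ¬ HasRedInitialSpread k 3 N χ) (ℓ : ℕ) :
    ((Finset.Icc 1 N).filter fun d => (P d).length = ℓ).card ≤ ℓ := by
  induction ℓ with
  | zero =>
    rw [Nat.le_zero, Finset.card_eq_zero, Finset.filter_eq_empty_iff]
    intro d _ h
    obtain ⟨Q, hPd, -⟩ := hP d
    simp [hPd] at h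
  | succ ℓ ih =>
    rcases Nat.eq_zero_or_pos ℓ with rfl | hℓ
    · -- Any vertex may be appended to a one-vertex path, so at most one vertex has depth `1`.
      rw [Nat.zero_add, Finset.card_le_one]
      have aux : ∀ b c, 1 ≤ b → b < c → (P b).length = 1 → (P c).length = 1 → False :=
        fun b c hb hbc h1 h2 => hP.not_ok hb hbc (h1.trans h2.symm) (Or.inl (by omega))
      intro b hb c hc
      rw [Finset.mem_filter, Finset.mem_Icc] at hb hc
      rcases lt_trichotomy b c with h | h | h
      · exact (aux b c hb.1.1 h hb.2 hc.2).elim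
      · exact h
      · exact (aux c b hc.1.1 h hc.2 hb.2).elim
    · set C := (Finset.Icc 1 N).filter fun d => (P d).length = ℓ + 1 with hC
      rcases C.eq_empty_or_nonempty with he | hne
      · simp [he]
      have hmaxC := C.max'_mem hne
      set z := C.max' hne with hz
      have hinj : (C.erase z).card ≤
          ((Finset.Icc 1 N).filter fun d => (P d).length = ℓ).card := by
        have hpar : ∀ d ∈ C, ∃ p, 1 ≤ p ∧ p < d ∧ (P d).tail = P p ∧ (P p).length = ℓ := by
          intro d hd
          obtain ⟨Q, hPd, hQ, -⟩ := hP d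
          have hlen := (Finset.mem_filter.1 hd).2
          rw [hPd, List.length_cons] at hlen
          rcases hQ with rfl | ⟨p, hp1, hpd, hQp, -⟩
          · simp at hlen
            omega
          · refine ⟨p, hp1, hpd, by rw [hPd, List.tail_cons, hQp], ?_⟩
            rw [← hQp]
            omega
        have aux : ∀ b b', b ∈ C → b' ∈ C.erase z → b < b' → (P b).tail = (P b').tail →
            False := by
          intro b b' hb hb' hlt ht
          obtain ⟨hne', hb'⟩ := Finset.mem_erase.1 hb'
          have hlast : b' < z := lt_of_le_of_ne (C.le_max' _ hb') hne'
          rw [hC, Finset.mem_filter, Finset.mem_Icc] at hb hb' hmaxC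
          exact hno (red_spread_of_triple hk hP hb.1.1 hlt hlast hmaxC.1.2
            (hb.2.trans hb'.2.symm) (hb'.2.trans hmaxC.2.symm) ht)
        choose! p hp1 hpd hpt hpl using hpar
        refine Finset.card_le_card_of_injOn p ?_ ?_
        · intro d hd
          have hd' := Finset.mem_of_mem_erase (Finset.mem_coe.1 hd)
          have hdN := (Finset.mem_Icc.1 (Finset.mem_filter.1 hd').1).2
          rw [Finset.mem_coe, Finset.mem_filter, Finset.mem_Icc]
          have := hpd d hd'
          exact ⟨⟨hp1 d hd', by omega⟩, hpl d hd'⟩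
        · intro b hb b' hb' heq
          rw [Finset.mem_coe] at hb hb'
          have mb := Finset.mem_of_mem_erase hb
          have mb' := Finset.mem_of_mem_erase hb'
          have ht : (P b).tail = (P b').tail := by rw [hpt b mb, hpt b' mb', heq]
          rcases lt_trichotomy b b' with h | h | h
          · exact (aux b b' mb hb' h ht).elim
          · exact h
          · exact (aux b' b mb' hb h ht.symm).elim
      rw [Finset.card_erase_of_mem hmaxC] at hinj
      omega

/-! ### Counting the vertices by depth -/

lemma path_or_spread (k n : ℕ) (hk : 3 ≤ k) (hkn : k < n) (χ : Finset ℕ → Bool) :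
    HasBlueTightPath k n (2 * n ^ 2) χ ∨ HasRedInitialSpread k 3 (2 * n ^ 2) χ := by
  by_contra hcon
  obtain ⟨hblue, hred⟩ := not_or.1 hcon
  obtain ⟨P, hP⟩ := exists_pathTree k χ
  have hdepth : ∀ d ∈ Finset.Icc 1 (2 * n ^ 2), (P d).length ∈ Finset.range n := by
    intro d hd
    rw [Finset.mem_Icc] at hd
    rw [Finset.mem_range]
    by_contra hlt
    exact hblue (hP.hasBlueTightPath hk d hd.1 hd.2 (not_lt.1 hlt))
  have hcard := Finset.card_eq_sum_card_fiberwise hdepth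
  have hsum : ∑ ℓ ∈ Finset.range n,
      ((Finset.Icc 1 (2 * n ^ 2)).filter fun d => (P d).length = ℓ).card ≤ n * n := by
    refine (Finset.sum_le_card_nsmul _ _ n fun ℓ hℓ => ?_).trans (by simp)
    exact (hP.card_level_le hk hred ℓ).trans (Finset.mem_range.1 hℓ).le
  rw [Nat.card_Icc] at hcard
  have : 0 < n ^ 2 := pow_pos (by omega) 2
  have : n ^ 2 = n * n := sq n
  omega

/-- For all integers `n > k ≥ 3`, `f_k(n) ≤ 2n²`: every red/blue
coloring of the `k`-element subsets of `{1,...,2n²}` contains a blue ordered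
`k`-uniform tight path `P_n`, or a set `S` of `k+1` vertices spanning at least 3 red
`k`-element subsets, one of which consists of the `k` smallest vertices of `S`. -/
theorem stmt_6 :
    ∀ k n : ℕ, 3 ≤ k → k < n →
      initialSpreadPathRamsey k 3 n ≤ 2 * n ^ 2 ∧
      ∀ χ : Finset ℕ → Bool,
        HasBlueTightPath k n (2 * n ^ 2) χ ∨ HasRedInitialSpread k 3 (2 * n ^ 2) χ := by
  intro k n hk hkn
  refine ⟨Nat.sInf_le ?_, path_or_spread k n hk hkn⟩
  intro χ
  exact (path_or_spread k n hk hkn χ).symm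
end

section
/- For all integers n ≥ k ≥ 3, r_k(k+1, 3; P_n) ≤ 16n: every red/blue coloring of the k-element subsets of {1,...,16n} contains a blue ordered copy of the k-uniform tight path on n vertices or a set of k+1 vertices spanning at least 3 red k-element subsets. -/
/-- A blue tight path, stored as the list of its vertices in decreasing order, so that extending
the path at its large end is `List.cons`.  Vertices are positive. -/
def BlueRev (χ : Finset ℕ → Bool) (k : ℕ) : List ℕ → Prop
  | [] => True
  | w :: l => BlueRev χ k l ∧ 0 < w ∧ (∀ x ∈ l, x < w) ∧
      (k ≤ l.length + 1 → χ (insert w (l.take (k - 1)).toFinset) = false)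

/-- A blue path on at least `m` vertices with two possible blue continuations `w₁ < w₂`, all inside
`{1, ..., B}`. -/
def Fork (χ : Finset ℕ → Bool) (k m B : ℕ) : Prop :=
  ∃ (l : List ℕ) (w₁ w₂ : ℕ), m ≤ l.length ∧ w₁ < w₂ ∧ w₂ ≤ B ∧
    BlueRev χ k (w₁ :: l) ∧ BlueRev χ k (w₂ :: l)

lemma blue_of_two_red {k N : ℕ} {χ : Finset ℕ → Bool} (h : ¬ HasRedSpread k (k + 1) 3 N χ)
    {U : Finset ℕ} (hU : U ⊆ Finset.Icc 1 N) (hc : U.card = k + 1) {a b c : ℕ}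
    (ha : a ∈ U) (hb : b ∈ U) (hcU : c ∈ U) (hab : a ≠ b) (hac : a ≠ c) (hbc : b ≠ c)
    (hra : χ (U.erase a) = true) (hrb : χ (U.erase b) = true) : χ (U.erase c) = false := by
  by_contra hrc
  rw [Bool.not_eq_false] at hrc
  apply h
  refine ⟨U, hU, hc, ?_⟩
  have hinj := Finset.erase_injOn U
  have h3 : (({a, b, c} : Finset ℕ).image U.erase).card = 3 := by
    rw [Finset.card_image_of_injOn, Finset.card_eq_three.2 ⟨a, b, c, hab, hac, hbc, rfl⟩]
    intro x hx y hy hxy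
    refine hinj ?_ ?_ hxy
    · simp only [Finset.coe_insert, Finset.coe_singleton, Set.mem_insert_iff,
        Set.mem_singleton_iff] at hx
      rcases hx with rfl | rfl | rfl <;> assumption
    · simp only [Finset.coe_insert, Finset.coe_singleton, Set.mem_insert_iff,
        Set.mem_singleton_iff] at hy
      rcases hy with rfl | rfl | rfl <;> assumption
  rw [← h3]
  apply Finset.card_le_card
  intro e he
  simp only [Finset.mem_image, Finset.mem_insert, Finset.mem_singleton] at he
  rw [Finset.mem_filter, Finset.mem_powersetCard]
  rcases he with ⟨x, rfl | rfl | rfl, rfl⟩ <;>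
    refine ⟨⟨Finset.erase_subset _ _, ?_⟩, by assumption⟩ <;>
    rw [Finset.card_erase_of_mem (by assumption), hc, Nat.add_sub_cancel]

lemma pigeonhole_four : ∀ p q : Fin 4 → Bool, ∃ a b : Fin 4, a < b ∧
    ((p a = false ∧ p b = false) ∨ (q a = false ∧ q b = false) ∨
      (p a = true ∧ p b = true ∧ q a = true ∧ q b = true)) := by
  intro p q
  by_contra! hn
  have h01 := hn 0 1 (by decide)
  have h02 := hn 0 2 (by decide)
  have h03 := hn 0 3 (by decide)
  have h12 := hn 1 2 (by decide)
  have h13 := hn 1 3 (by decide)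
  have h23 := hn 2 3 (by decide)
  clear hn
  generalize p 0 = p₀, p 1 = p₁, p 2 = p₂, p 3 = p₃, q 0 = q₀, q 1 = q₁, q 2 = q₂, q 3 = q₃ at *
  cases p₀ <;> cases p₁ <;> cases p₂ <;> cases p₃ <;> simp_all

lemma BlueRev.lt_of_mem {χ : Finset ℕ → Bool} {k w : ℕ} {l : List ℕ} (h : BlueRev χ k (w :: l))
    {x : ℕ} (hx : x ∈ l) : x < w := h.2.2.1 x hx

lemma BlueRev.pos {χ : Finset ℕ → Bool} {k : ℕ} {l : List ℕ} (h : BlueRev χ k l) :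
    ∀ x ∈ l, 0 < x := by
  induction l with
  | nil => simp
  | cons w l ih =>
    intro x hx
    rcases List.mem_cons.1 hx with rfl | hx
    · exact h.2.1
    · exact ih h.1 x hx

lemma BlueRev.pairwise {χ : Finset ℕ → Bool} {k : ℕ} {l : List ℕ} (h : BlueRev χ k l) :
    l.Pairwise (· > ·) := by
  induction l with
  | nil => simp
  | cons w l ih => exact List.pairwise_cons.2 ⟨h.2.2.1, ih h.1⟩

lemma BlueRev.window {χ : Finset ℕ → Bool} {k : ℕ} (hk : 1 ≤ k) {l : List ℕ}
    (h : BlueRev χ k l) : ∀ d, d + k ≤ l.length → χ ((l.drop d).take k).toFinset = false := by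
  induction l with
  | nil => intro d hd; simp at hd; omega
  | cons w l ih =>
    intro d hd
    cases d with
    | zero =>
      obtain ⟨j, rfl⟩ : ∃ j, k = j + 1 := ⟨k - 1, by omega⟩
      have := h.2.2.2 (by simpa using hd)
      simpa using this
    | succ d =>
      simp only [List.drop_succ_cons]
      exact ih h.1 d (by simp at hd; omega)

lemma BlueRev.cons {χ : Finset ℕ → Bool} {k w z : ℕ} {l : List ℕ} (h : BlueRev χ k (w :: l))
    (hwz : w < z) (hb : k ≤ l.length + 2 → χ (insert z ((w :: l).take (k - 1)).toFinset) = false) :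
    BlueRev χ k (z :: w :: l) := by
  refine ⟨h, by omega, ?_, by simpa using hb⟩
  intro x hx
  rcases List.mem_cons.1 hx with rfl | hx
  · exact hwz
  · exact (h.lt_of_mem hx).trans hwz

/-- Two red `k`-sets `S ∪ {w₁, z}`, `S ∪ {w₂, z}` make `P w₁ w₂ z` a blue path. -/
lemma BlueRev.cons_cons_of_red {k N : ℕ} {χ : Finset ℕ → Bool} (hk : 3 ≤ k)
    (h : ¬ HasRedSpread k (k + 1) 3 N χ) {l : List ℕ} {w₁ w₂ z : ℕ} (hl : k ≤ l.length + 2)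
    (h1 : BlueRev χ k (w₁ :: l)) (h12 : w₁ < w₂) (h2z : w₂ < z) (hz : z ≤ N)
    (hr1 : χ (insert z (insert w₁ (l.take (k - 2)).toFinset)) = true)
    (hr2 : χ (insert z (insert w₂ (l.take (k - 2)).toFinset)) = true) :
    BlueRev χ k (z :: w₂ :: w₁ :: l) := by
  obtain ⟨j, rfl⟩ : ∃ j, k = j + 3 := ⟨k - 3, by omega⟩
  simp only [show j + 3 - 2 = j + 1 from rfl] at *
  have hj : j < l.length := by omega
  -- `l[j]` is the minimum `s` of `S`.
  have hS : (l.take (j + 1)).toFinset = insert l[j] (l.take j).toFinset := by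
    rw [List.take_succ_eq_append_getElem hj, List.toFinset_append, Finset.union_comm]
    rfl
  have hnd : l.Nodup := h1.1.pairwise.imp (fun h => ne_of_gt h)
  have hs : l[j] ∉ (l.take j).toFinset := by
    have := hnd.sublist (List.take_sublist (j + 1) l)
    rw [List.take_succ_eq_append_getElem hj, List.nodup_append] at this
    intro hm
    exact this.2.2 _ (List.mem_toFinset.1 hm) _ (List.mem_singleton_self _) rfl
  have hcard : (l.take j).toFinset.card = j := by
    rw [List.toFinset_card_of_nodup (hnd.sublist (List.take_sublist _ _)), List.length_take]
    omega
  have hlt : ∀ x ∈ (l.take j).toFinset, 0 < x ∧ x < w₁ := fun x hx =>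
    have hx := List.mem_of_mem_take (List.mem_toFinset.1 hx)
    ⟨h1.1.pos x hx, h1.lt_of_mem hx⟩
  have hslt : 0 < l[j] ∧ l[j] < w₁ :=
    ⟨h1.1.pos _ (List.getElem_mem hj), h1.lt_of_mem (List.getElem_mem hj)⟩
  rw [hS] at hr1 hr2
  have hA₁ : w₁ ∉ (l.take j).toFinset := fun hm => by have := hlt _ hm; omega
  have hA₂ : w₂ ∉ (l.take j).toFinset := fun hm => by have := hlt _ hm; omega
  have hA₃ : z ∉ (l.take j).toFinset := fun hm => by have := hlt _ hm; omega
  have key : χ (insert w₂ (insert w₁ (insert l[j] (l.take j).toFinset))) = false ∧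
      χ (insert z (insert w₂ (insert w₁ (l.take j).toFinset))) = false := by
    generalize l[j] = s at *
    generalize (l.take j).toFinset = A at *
    set U : Finset ℕ := insert z (insert w₂ (insert w₁ (insert s A))) with hU
    have hUc : U.card = j + 3 + 1 := by
      rw [hU, Finset.card_insert_of_notMem, Finset.card_insert_of_notMem,
        Finset.card_insert_of_notMem, Finset.card_insert_of_notMem hs, hcard]
      all_goals grind
    have hUN : U ⊆ Finset.Icc 1 N := by
      intro x hx
      rw [Finset.mem_Icc]
      simp only [hU, Finset.mem_insert] at hx
      rcases hx with rfl | rfl | rfl | rfl | hx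
      · omega
      · omega
      · omega
      · omega
      · have := hlt x hx
        omega
    have e1 : U.erase w₂ = insert z (insert w₁ (insert s A)) := by grind
    have e2 : U.erase w₁ = insert z (insert w₂ (insert s A)) := by grind
    have e3 : U.erase z = insert w₂ (insert w₁ (insert s A)) := by grind
    have e4 : U.erase s = insert z (insert w₂ (insert w₁ A)) := by grind
    rw [← e1] at hr1
    rw [← e2] at hr2
    rw [← e3, ← e4]
    constructor
    · exact blue_of_two_red h hUN hUc (by simp [hU]) (by simp [hU]) (by simp [hU])
        (by omega) (by omega) (by omega) hr1 hr2
    · exact blue_of_two_red h hUN hUc (by simp [hU]) (by simp [hU]) (by simp [hU])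
        (by omega) (by omega) (by omega) hr1 hr2
  refine (h1.cons h12 fun _ => ?_).cons h2z fun _ => ?_
  · simpa [hS] using key.1
  · simpa using key.2

lemma Fork.step {k N m B : ℕ} {χ : Finset ℕ → Bool} (hk : 3 ≤ k)
    (h : ¬ HasRedSpread k (k + 1) 3 N χ) (hB : B + 4 ≤ N) (hF : Fork χ k m B) :
    Fork χ k (m + 1) (B + 4) := by
  obtain ⟨l, w₁, w₂, hm, h12, h2B, hb1, hb2⟩ := hF
  have hlen : ∀ w : ℕ, m + 1 ≤ (w :: l).length := fun w => by simpa using hm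
  by_cases hl : k ≤ l.length + 2
  · obtain ⟨j, rfl⟩ : ∃ j, k = j + 2 := ⟨k - 2, by omega⟩
    have htake : ∀ w : ℕ, ((w :: l).take (j + 2 - 1)).toFinset
        = insert w (l.take (j + 2 - 2)).toFinset := fun w => by simp
    obtain ⟨a, b, hab, hcase⟩ := pigeonhole_four
      (fun i => χ (insert (B + 1 + i.val) (insert w₁ (l.take (j + 2 - 2)).toFinset)))
      (fun i => χ (insert (B + 1 + i.val) (insert w₂ (l.take (j + 2 - 2)).toFinset)))
    have hab' : a.val < b.val := hab
    have hb4 := b.isLt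
    rcases hcase with ⟨ha, hb⟩ | ⟨ha, hb⟩ | ⟨ha1, hc1, ha2, hc2⟩
    · exact ⟨w₁ :: l, B + 1 + a, B + 1 + b, hlen _, by omega, by omega,
        hb1.cons (by omega) fun _ => by rw [htake]; exact ha,
        hb1.cons (by omega) fun _ => by rw [htake]; exact hb⟩
    · exact ⟨w₂ :: l, B + 1 + a, B + 1 + b, hlen _, by omega, by omega,
        hb2.cons (by omega) fun _ => by rw [htake]; exact ha,
        hb2.cons (by omega) fun _ => by rw [htake]; exact hb⟩
    · exact ⟨w₂ :: w₁ :: l, B + 1 + a, B + 1 + b, by simp; omega, by omega, by omega,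
        hb1.cons_cons_of_red hk h hl h12 (by omega) (by omega) ha1 ha2,
        hb1.cons_cons_of_red hk h hl h12 (by omega) (by omega) hc1 hc2⟩
  · have hshort : l.length + 2 < k := by omega
    -- The extended path is too short to contain any `k`-window.
    exact ⟨w₁ :: l, B + 1, B + 2, hlen _, by omega, by omega,
      hb1.cons (by omega) fun _ => by omega, hb1.cons (by omega) fun _ => by omega⟩

lemma Fork.exists {k N : ℕ} {χ : Finset ℕ → Bool} (hk : 3 ≤ k)
    (h : ¬ HasRedSpread k (k + 1) 3 N χ) (m : ℕ) (hm : 4 * m + 2 ≤ N) :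
    Fork χ k m (4 * m + 2) := by
  induction m with
  | zero =>
    refine ⟨[], 1, 2, by simp, by omega, by omega, ?_, ?_⟩ <;>
      exact ⟨trivial, by omega, by simp, fun hk' => by simp at hk'; omega⟩
  | succ m ih => exact Fork.step hk h (by omega) (ih (by omega))

lemma BlueRev.hasBlueTightPath {k n N : ℕ} {χ : Finset ℕ → Bool} (hk : 1 ≤ k) {l : List ℕ}
    (h : BlueRev χ k l) (hn : n ≤ l.length) (hN : ∀ x ∈ l, x ≤ N) :
    HasBlueTightPath k n N χ := by
  have hanti : ∀ a b (hab : a < b) (hb : b < l.length), l[b] < l[a] := fun a b hab hb =>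
    List.pairwise_iff_getElem.1 h.pairwise a b (by omega) hb hab
  -- Beyond the end of the list, the sequence is continued by numbers larger than `N`.
  refine ⟨fun i => if hi : i < l.length then l[l.length - 1 - i] else N + 1 + i, ?_, ?_, ?_⟩
  · refine strictMono_nat_of_lt_succ fun i => ?_
    by_cases h1 : i + 1 < l.length
    · have h0 : i < l.length := by omega
      simp only [h0, h1, dif_pos]
      exact hanti _ _ (by omega) (by omega)
    · by_cases h0 : i < l.length
      · simp only [h0, h1, dif_pos, dif_neg, not_false_iff]
        have := hN _ (List.getElem_mem (show l.length - 1 - i < l.length by omega))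
        omega
      · simp only [h0, h1, dif_neg, not_false_iff]
        omega
  · intro i hi
    have h0 : i < l.length := by omega
    simp only [h0, dif_pos, Finset.mem_Icc]
    exact ⟨h.pos _ (List.getElem_mem _), hN _ (List.getElem_mem _)⟩
  · intro j hj
    rw [← h.window hk (l.length - j - k) (by omega)]
    congr 1
    ext x
    simp only [Finset.mem_image, Finset.mem_range, List.mem_toFinset, List.mem_iff_getElem,
      List.getElem_take, List.getElem_drop, List.length_take, List.length_drop]
    constructor
    · rintro ⟨i, hi, rfl⟩
      refine ⟨k - 1 - i, by omega, ?_⟩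
      rw [dif_pos (by omega)]
      congr 1
      omega
    · rintro ⟨i, hi, rfl⟩
      refine ⟨k - 1 - i, by omega, ?_⟩
      rw [dif_pos (by omega)]
      congr 1
      omega

/-- For all integers `n ≥ k ≥ 3`, `r_k(k+1, 3; P_n) ≤ 16n`: every
red/blue coloring of the `k`-element subsets of `{1,...,16n}` contains a blue ordered
`k`-uniform tight path on `n` vertices or a set of `k+1` vertices spanning at least 3
red `k`-element subsets. -/
theorem stmt_9 :
    ∀ k n : ℕ, 3 ≤ k → k ≤ n →
      spreadPathRamsey k (k + 1) 3 n ≤ 16 * n ∧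
      ∀ χ : Finset ℕ → Bool,
        HasBlueTightPath k n (16 * n) χ ∨ HasRedSpread k (k + 1) 3 (16 * n) χ := by
  intro k n hk hkn
  have main : ∀ χ : Finset ℕ → Bool,
      HasBlueTightPath k n (16 * n) χ ∨ HasRedSpread k (k + 1) 3 (16 * n) χ := by
    intro χ
    by_cases h : HasRedSpread k (k + 1) 3 (16 * n) χ
    · exact Or.inr h
    · left
      obtain ⟨l, w₁, w₂, hm, h12, h2, hb, -⟩ := Fork.exists hk h (n - 1) (by omega)
      refine hb.hasBlueTightPath (by omega) (by simp; omega) ?_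
      intro x hx
      rcases List.mem_cons.1 hx with rfl | hx
      · omega
      · have := hb.lt_of_mem hx
        omega
  exact ⟨Nat.sInf_le fun χ => (main χ).symm, main⟩
end
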